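/- arXiv:1501.03377 — 4 statements merged into one kernel-verified Lean document; each statement's English description precedes it below -/
import Mathlib

section
/- Let (G,x,y) encode a reflexive regular map that is simple, satisfies 2q² > |G| and 3q² ≤ 2|G| (i.e. 1/2 < den ≤ 2/3), has p = 3, and is not the tetrahedral map tet. If v, w, u are vertices with V = V_v ∪ V_w ∪ V_u, then the set of neighbours of v in Γ is exactly V_w ∪ V_u. -/
namespace RegularMap

variable {G : Type*} [Group G]

/-- The vertex set of the map: left cosets of the cyclic subgroup generated by `y`. -/
abbrev Vertex (y : G) : Type _ := G ⧸ Subgroup.zpowers y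

/-- The rotation about the vertex `v = g⟨y⟩`, namely `g * y * g⁻¹`. -/
def rot (y : G) (v : Vertex y) : G :=
  Quotient.liftOn' v (fun g => g * y * g⁻¹) (by
    intro a b h
    obtain ⟨k, hk⟩ := QuotientGroup.leftRel_apply.mp h
    have hk' : y ^ k = a⁻¹ * b := hk
    have hb : b = a * y ^ k := by rw [hk']; group
    subst hb
    group)

/-- Two vertices are adjacent iff they are distinct and form the endpoint pair of
some edge `g⟨x*y⟩`, whose endpoints are `g⟨y⟩` and `g*x*y⟨y⟩`. -/
def Adj (x y : G) (v w : Vertex y) : Prop :=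
  v ≠ w ∧ ∃ g : G,
    ({v, w} : Set (Vertex y)) = {QuotientGroup.mk g, QuotientGroup.mk (g * x * y)}

/-- The map is simple: no edge has equal endpoints, and distinct edges (left cosets
of `⟨x*y⟩`) have distinct endpoint pairs. -/
def IsSimple (x y : G) : Prop :=
  (∀ g : G, (QuotientGroup.mk g : Vertex y) ≠ QuotientGroup.mk (g * x * y)) ∧
  ∀ g h : G,
    ({QuotientGroup.mk g, QuotientGroup.mk (g * x * y)} : Set (Vertex y)) =
      {QuotientGroup.mk h, QuotientGroup.mk (h * x * y)} →
    (QuotientGroup.mk g : G ⧸ Subgroup.zpowers (x * y)) = QuotientGroup.mk h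

/-- The map is reflexive: some group automorphism inverts both `x` and `y`. -/
def IsReflexive (x y : G) : Prop :=
  ∃ σ : G ≃* G, σ x = x⁻¹ ∧ σ y = y⁻¹

/-- An automorphism of the map (given a reflection σ): either orientation preserving,
`g⟨y⟩ ↦ a*g⟨y⟩`, or orientation reversing, `g⟨y⟩ ↦ a*σ(g)⟨y⟩`. -/
def IsMapAut (y : G) (σ : G ≃* G) (φ : Vertex y → Vertex y) : Prop :=
  (∃ a : G, ∀ g : G, φ (QuotientGroup.mk g) = QuotientGroup.mk (a * g)) ∨
  (∃ a : G, ∀ g : G, φ (QuotientGroup.mk g) = QuotientGroup.mk (a * σ g))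

/-- `v'` is a diagonal neighbour of `v`: `v' = S_w² • v` for some vertex `w` adjacent to `v`. -/
def DiagNeighbor (x y : G) (v v' : Vertex y) : Prop :=
  ∃ w : Vertex y, Adj x y v w ∧ v' = rot y w ^ 2 • v

/-- Diagonal alignment: the reflexive-transitive closure of the diagonal-neighbour relation. -/
def Aligned (x y : G) : Vertex y → Vertex y → Prop :=
  Relation.ReflTransGen (DiagNeighbor x y)

/-- The primitive period `J`: the least `j ≥ 1` such that `S_v^j` fixes every vertex
diagonally aligned with `v` (this is independent of `v`). -/
noncomputable def primPeriod (x y : G) : ℕ :=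
  sInf {j : ℕ | 1 ≤ j ∧ ∀ v v' : Vertex y, Aligned x y v v' → rot y v ^ j • v' = v'}

/-- The even period `T = lcm(J, 2)`. -/
noncomputable def evenPeriod (x y : G) : ℕ := Nat.lcm (primPeriod x y) 2

/-- Relators of the tetrahedral group ⟨X,Y ∣ X³, Y³, (XY)²⟩. -/
def tetRels : Set (FreeGroup (Fin 2)) :=
  {FreeGroup.of 0 ^ 3, FreeGroup.of 1 ^ 3, (FreeGroup.of 0 * FreeGroup.of 1) ^ 2}

/-- Relators of the Fermat group ⟨X,Y ∣ X³, Y^(2n), (XY)², [X,Y]³⟩. -/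
def fermatRels (n : ℕ) : Set (FreeGroup (Fin 2)) :=
  {FreeGroup.of 0 ^ 3, FreeGroup.of 1 ^ (2 * n), (FreeGroup.of 0 * FreeGroup.of 1) ^ 2,
    (FreeGroup.of 0 * FreeGroup.of 1 * (FreeGroup.of 0)⁻¹ * (FreeGroup.of 1)⁻¹) ^ 3}

/-- `(G,x,y)` is the tetrahedral map: the canonical homomorphism from the presented
group ⟨X,Y ∣ X³, Y³, (XY)²⟩ sending X to x and Y to y is an isomorphism. -/
def IsTet (G : Type*) [Group G] (x y : G) : Prop :=
  ∃ e : PresentedGroup tetRels ≃* G,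
    e (PresentedGroup.of 0) = x ∧ e (PresentedGroup.of 1) = y

/-- `(G,x,y)` is the Fermat map `Fer(n)`: the canonical homomorphism from the Fermat
group `G_n` sending X to x and Y to y is an isomorphism. -/
def IsFermat (n : ℕ) (G : Type*) [Group G] (x y : G) : Prop :=
  ∃ e : PresentedGroup (fermatRels n) ≃* G,
    e (PresentedGroup.of 0) = x ∧ e (PresentedGroup.of 1) = y

/-!
Put `t = x * y`, let `o = ⟨y⟩` be the base vertex and `D = ⟨y, t * y² * t⟩`, the group generated by
the rotation about `o` and the squared rotation about its neighbour `t • o`. A subgroup containing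
`D` but not `t` has index three, with left cosets represented by `1`, `t`, `y * t`. Since `o` has
more than half of all vertices as neighbours, every other vertex is fixed by a nontrivial rotation
about `o`. For the diagonal neighbour `t * y² * t • o` this rotation generates a subgroup of `⟨y⟩`
normalised by `D`, while `t` normalises no nontrivial subgroup of `⟨y⟩`; hence `D` has index three.

By the reflection, an `a ∈ ⟨y⟩` for which `t * a * t • o` is a neighbour of `o` satisfies
`(t * a)³ = 1`. Counting in the block `D • o`, which has fewer than `2q / 3` vertices, shows that
fewer than a third of the elements of `⟨y²⟩ * y` violate this, so that `w * y⁻¹`, `w * y` and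
`w * y³` satisfy it for a common `w`, and then `y⁴` is central in `D`. A rotation about `o` fixing
a vertex outside `D • o` has its square in `⟨y⁴⟩`, so maximality of `D` makes that square trivial.
A vertex outside `D • o` that is not a neighbour of `o` would need a stabiliser of order more than
three in `⟨y⟩`, so the neighbours of `o` are exactly the vertices outside its block. Aligned
vertices share a block and there are three blocks, so three alignment classes covering the vertices
are the blocks.
-/

open MulAction Subgroup
open scoped Pointwise

/-- When `t` is an involution this says `(t * a) ^ 3 = 1`. For the half-turn `t` about an edge and
the rotation `a` about an endpoint `o` taking this edge to the next one, it says that the three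
vertices `o`, `t • o`, `a • t • o` bound a face. -/
def IsTriangular (t a : G) : Prop := t * a * t = a⁻¹ * t * a⁻¹

theorem IsTriangular.inv {t a : G} (ht : t * t = 1) (ha : IsTriangular t a) :
    IsTriangular t a⁻¹ := by
  have hti : t⁻¹ = t := inv_eq_of_mul_eq_one_left ht
  simpa only [IsTriangular, mul_inv_rev, inv_inv, hti, mul_assoc] using congrArg (·⁻¹) ha

theorem conj_mul_conj {t : G} (ht : t * t = 1) (a b : G) :
    t * a * t * (t * b * t) = t * (a * b) * t := by
  calc t * a * t * (t * b * t) = t * a * (t * t) * b * t := by group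
    _ = t * (a * b) * t := by rw [ht]; group

theorem IsTriangular.commute_mul {t a b : G} (ht : t * t = 1) (hab : Commute a b)
    (ha : IsTriangular t a) (hb : IsTriangular t b) :
    Commute (a * b) (t * (a * b⁻¹) * t) := by
  have hti : t⁻¹ = t := inv_eq_of_mul_eq_one_left ht
  have hbi : t * b⁻¹ * t = b * t * b := by simpa only [IsTriangular, inv_inv] using hb.inv ht
  set c := t * (a * b⁻¹) * t with hc
  have hci : c⁻¹ = t * (b * a⁻¹) * t := by rw [hc, mul_inv_rev, mul_inv_rev, hti]; group
  have hleft : c = a⁻¹ * c⁻¹ * b := by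
    calc c = (t * a * t) * (t * b⁻¹ * t) := (conj_mul_conj ht a b⁻¹).symm
      _ = a⁻¹ * (t * (a⁻¹ * b) * t) * b := by rw [ha, hbi]; group
      _ = a⁻¹ * c⁻¹ * b := by rw [hci, hab.inv_left.eq]
  have hright : c = b * c⁻¹ * a⁻¹ := by
    calc c = (t * b⁻¹ * t) * (t * a * t) := by rw [conj_mul_conj ht, hc, hab.inv_right.eq]
      _ = b * (t * (b * a⁻¹) * t) * a⁻¹ := by rw [ha, hbi]; group
      _ = b * c⁻¹ * a⁻¹ := by rw [hci]
  calc a * b * c = b * a * (a⁻¹ * c⁻¹ * b) := by rw [← hleft, hab.eq]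
    _ = (b * c⁻¹ * a⁻¹) * (a * b) := by group
    _ = c * (a * b) := by rw [← hright]

theorem IsTriangular.commute_sq_conj_sq {t w z : G} (ht : t * t = 1) (hwz : Commute w z)
    (h : IsTriangular t (w * z)) (h' : IsTriangular t (w * z⁻¹)) :
    Commute (w ^ 2) (t * z ^ 2 * t) := by
  have hcomm : Commute (w * z) (w * z⁻¹) :=
    ((Commute.refl w).mul_left hwz.symm).mul_right ((hwz.mul_left (Commute.refl z)).inv_right)
  have hmul : w * z * (w * z⁻¹) = w ^ 2 := by
    rw [hwz.symm.mul_mul_mul_comm, mul_inv_cancel, mul_one, sq]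
  have hdiv : w * z * (w * z⁻¹)⁻¹ = z ^ 2 := by
    rw [hwz.eq, mul_inv_rev, inv_inv, hwz.mul_mul_mul_comm, mul_inv_cancel, mul_one, sq]
  simpa only [hmul, hdiv] using h.commute_mul ht hcomm h'

section Actions

theorem disjoint_orbit_of_notMem {H X : Type*} [Group H] [MulAction H X] {p q : X}
    (hq : q ∉ orbit H p) : Disjoint (orbit H p) (orbit H q) :=
  (orbit.eq_or_disjoint p q).resolve_left fun h => hq (h ▸ mem_orbit_self q)

theorem stabilizer_ne_bot_of_card_lt {H X : Type*} [Group H] [MulAction H X] [Finite X]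
    {p q : X} (hcard : Nat.card X < 2 * Nat.card H) (hp : stabilizer H p = ⊥)
    (hq : q ∉ orbit H p) : stabilizer H q ≠ ⊥ := by
  intro hq'
  have hunion := Set.ncard_union_eq (disjoint_orbit_of_notMem hq)
  have hle := Set.ncard_le_card (orbit H p ∪ orbit H q)
  rw [← index_stabilizer, ← index_stabilizer, hp, hq', index_bot] at hunion
  omega

theorem mk_mem_orbit_mk_iff {H : Subgroup G} {g k : G} :
    (k : G ⧸ H) ∈ orbit H (g : G ⧸ H) ↔ ∃ a ∈ H, ∃ b ∈ H, k = a * g * b := by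
  constructor
  · rintro ⟨a, ha⟩
    have ha : ((a * g : G) : G ⧸ H) = k := ha
    exact ⟨a, a.2, _, QuotientGroup.eq.mp ha, by group⟩
  · rintro ⟨a, ha, b, hb, rfl⟩
    exact ⟨⟨a, ha⟩, (QuotientGroup.mk_mul_of_mem (a * g) hb).symm⟩

theorem mem_stabilizer_mk_iff {H : Subgroup G} {g : G} {a : H} :
    a ∈ stabilizer H (g : G ⧸ H) ↔ g⁻¹ * a * g ∈ H := by
  rw [mem_stabilizer_iff, eq_comm, mul_assoc]
  exact QuotientGroup.eq

theorem eq_one_of_conj_mem {H : Subgroup G} {g a : G} (hstab : stabilizer H (g : G ⧸ H) = ⊥)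
    (ha : a ∈ H) (h : g⁻¹ * a * g ∈ H) : a = 1 := by
  have hmem : (⟨a, ha⟩ : H) ∈ stabilizer H (g : G ⧸ H) := mem_stabilizer_mk_iff.mpr h
  rw [hstab, mem_bot] at hmem
  exact congrArg Subtype.val hmem

theorem eq_of_mk_mul_eq {H : Subgroup G} {g a b : G} (hstab : stabilizer H (g : G ⧸ H) = ⊥)
    (ha : a ∈ H) (hb : b ∈ H) (h : ((a * g : G) : G ⧸ H) = (b * g : G)) : a = b := by
  have hmem : g⁻¹ * (a⁻¹ * b) * g ∈ H := by
    convert QuotientGroup.eq.mp h using 1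
    group
  exact inv_mul_eq_one.mp (eq_one_of_conj_mem hstab (mul_mem (inv_mem ha) hb) hmem)

theorem eq_and_eq_of_mul_mul_eq {H : Subgroup G} {g a b c d : G}
    (hstab : stabilizer H (g : G ⧸ H) = ⊥) (ha : a ∈ H) (hb : b ∈ H) (hc : c ∈ H) (hd : d ∈ H)
    (h : a * g * b = c * g * d) : a = c ∧ b = d := by
  have hac : a = c := eq_of_mk_mul_eq hstab ha hc <| by
    rw [← QuotientGroup.mk_mul_of_mem (a * g) hb, h, QuotientGroup.mk_mul_of_mem (c * g) hd]
  exact ⟨hac, mul_left_cancel (hac ▸ h)⟩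

theorem mk_mem_orbit_one {H K : Subgroup G} {k : G} (hk : k ∈ K) :
    (k : G ⧸ H) ∈ orbit K ((1 : G) : G ⧸ H) :=
  ⟨⟨k, hk⟩, congrArg QuotientGroup.mk (mul_one k)⟩

theorem ncard_orbit_one {H K : Subgroup G} : (orbit K ((1 : G) : G ⧸ H)).ncard = H.relIndex K := by
  rw [← index_stabilizer, relIndex]
  congr 1
  ext a
  rw [mem_stabilizer_iff, eq_comm, mem_subgroupOf, ← one_mul (a : G), ← inv_one]
  exact QuotientGroup.eq.trans (by simp)

theorem disjoint_orbit_mk_orbit_one {H K : Subgroup G} (hle : H ≤ K) {g : G} (hg : g ∉ K) :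
    Disjoint (orbit H (g : G ⧸ H)) (orbit K ((1 : G) : G ⧸ H)) := by
  rw [Set.disjoint_left]
  rintro _ ⟨a, rfl⟩ ⟨k, hk⟩
  have hkag : (k * 1 : G)⁻¹ * (a * g) ∈ H := QuotientGroup.eq.mp hk
  rw [mul_one] at hkag
  exact hg ((Subgroup.mul_mem_cancel_left K (hle a.2)).mp
    ((Subgroup.mul_mem_cancel_left K (inv_mem k.2)).mp (hle hkag)))

theorem exists_forall_mul_notMem {S : Type*} [Group S] {B : Set S} {T : Finset S}
    (h : B.ncard * T.card < Nat.card S) : ∃ w, ∀ s ∈ T, w * s ∉ B := by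
  by_contra! hcon
  have huniv : B * (T : Set S)⁻¹ = Set.univ := by
    refine Set.eq_univ_of_forall fun w => ?_
    obtain ⟨s, hs, hw⟩ := hcon w
    exact ⟨w * s, hw, s⁻¹, Set.inv_mem_inv.mpr hs, mul_inv_cancel_right w s⟩
  have hle := Set.natCard_mul_le (s := B) (t := (T : Set S)⁻¹)
  rw [huniv, Set.natCard_inv, Nat.card_univ, Nat.card_coe_set_eq, Nat.card_coe_set_eq,
    Set.ncard_coe_finset] at hle
  omega

end Actions

section Cyclic

theorem commute_of_mem_zpowers {y a b : G} (ha : a ∈ zpowers y) (hb : b ∈ zpowers y) :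
    Commute a b := by
  obtain ⟨i, rfl⟩ := ha
  obtain ⟨j, rfl⟩ := hb
  exact Commute.zpow_zpow_self y i j

theorem zpowers_pow_le (y : G) (n : ℕ) : zpowers (y ^ n) ≤ zpowers y :=
  zpowers_le.mpr (pow_mem (mem_zpowers y) n)

theorem coe_zpowers_eq_setOf_pow_eq_one {C : Type*} [Group C] [IsCyclic C] [Finite C] (a : C) :
    (zpowers a : Set C) = {c | c ^ orderOf a = 1} := by
  classical
  have := Fintype.ofFinite C
  refine Set.eq_of_subset_of_ncard_le (fun c hc => ?_) ?_
  · exact orderOf_dvd_iff_pow_eq_one.mp (orderOf_dvd_of_mem_zpowers hc)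
  · have hle := IsCyclic.card_pow_eq_one_le (α := C) (orderOf_pos a)
    rw [← Set.ncard_coe_finset, Finset.coe_filter_univ] at hle
    rwa [← Nat.card_coe_set_eq (zpowers a : Set C), SetLike.coe_sort_coe, Nat.card_zpowers]

theorem mem_zpowers_of_pow_orderOf_eq_one [Finite G] {y a b : G} (ha : a ∈ zpowers y)
    (hb : b ∈ zpowers y) (h : b ^ orderOf a = 1) : b ∈ zpowers a := by
  have hmem : (⟨b, hb⟩ : zpowers y) ∈ zpowers (⟨a, ha⟩ : zpowers y) := by
    rw [← SetLike.mem_coe, coe_zpowers_eq_setOf_pow_eq_one, Set.mem_ofPred_eq, orderOf_mk]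
    exact Subtype.ext h
  obtain ⟨k, hk⟩ := hmem
  exact ⟨k, congrArg Subtype.val hk⟩

theorem zpowers_eq_of_orderOf_eq [Finite G] {y a b : G} (ha : a ∈ zpowers y) (hb : b ∈ zpowers y)
    (h : orderOf a = orderOf b) : zpowers a = zpowers b := by
  refine le_antisymm (zpowers_le.mpr ?_) (zpowers_le.mpr ?_)
  · exact mem_zpowers_of_pow_orderOf_eq_one hb ha (h ▸ pow_orderOf_eq_one a)
  · exact mem_zpowers_of_pow_orderOf_eq_one ha hb (h ▸ pow_orderOf_eq_one b)

theorem mem_normalizer_zpowers [Finite G] {y a g : G} (ha : a ∈ zpowers y)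
    (hg : g * a * g⁻¹ ∈ zpowers y) : g ∈ normalizer (zpowers a : Set G) := by
  rw [mem_normalizer_iff_map_conj_eq, MonoidHom.map_zpowers]
  exact zpowers_eq_of_orderOf_eq hg ha
    (orderOf_injective (MulAut.conj g).toMonoidHom (MulAut.conj g).injective a)

theorem orderOf_le_two_mul_card_zpowers_sq [Finite G] (y : G) :
    orderOf y ≤ 2 * Nat.card (zpowers (y ^ 2)) := by
  rw [Nat.card_zpowers, orderOf_pow]
  calc orderOf y = orderOf y / (orderOf y).gcd 2 * (orderOf y).gcd 2 :=
        (Nat.div_mul_cancel (Nat.gcd_dvd_left _ 2)).symm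
    _ ≤ orderOf y / (orderOf y).gcd 2 * 2 := Nat.mul_le_mul_left _ (Nat.gcd_le_right _ two_pos)
    _ = 2 * (orderOf y / (orderOf y).gcd 2) := mul_comm _ _

end Cyclic

section IndexThree

variable {t y : G} {D : Subgroup G}

theorem mk_mem_of_conj_sq_mem (hgen : closure {t, y} = ⊤) (ht : t * t = 1)
    (hy : IsTriangular t y) (hyD : y ∈ D) (hZ : t * y ^ 2 * t ∈ D) (g : G) :
    (g : G ⧸ D) ∈ ({((1 : G) : G ⧸ D), (t : G ⧸ D), ((y * t : G) : G ⧸ D)} : Set (G ⧸ D)) := by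
  have hti : t⁻¹ = t := inv_eq_of_mul_eq_one_left ht
  set s : Set (G ⧸ D) := {((1 : G) : G ⧸ D), (t : G ⧸ D), ((y * t : G) : G ⧸ D)} with hs
  have hyyt : ((y * (y * t) : G) : G ⧸ D) = t := by
    rw [eq_comm, QuotientGroup.eq, hti]
    convert hZ using 1
    simp only [sq, mul_assoc]
  have htyt : ((t * (y * t) : G) : G ⧸ D) = (y * t : G) := by
    rw [← mul_assoc, hy, eq_comm, QuotientGroup.eq]
    convert mul_mem (inv_mem hZ) (inv_mem hyD) using 1
    simp only [sq, mul_inv_rev, mul_assoc, hti]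
  have hsmul : stabilizer G s = ⊤ := by
    rw [eq_top_iff, ← hgen, closure_le, Set.pair_subset_iff]
    have hfin : s.Finite := Set.toFinite s
    simp only [SetLike.mem_coe, mem_stabilizer_set' hfin]
    simp only [hs, Set.mem_insert_iff,
      Set.mem_singleton_iff, forall_eq_or_imp, forall_eq]
    refine ⟨⟨Or.inr (Or.inl ?_), Or.inl ?_, Or.inr (Or.inr htyt)⟩,
      ⟨Or.inl ?_, Or.inr (Or.inr rfl), Or.inr (Or.inl hyyt)⟩⟩
    · exact congrArg QuotientGroup.mk (mul_one t)
    · exact congrArg QuotientGroup.mk ht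
    · exact QuotientGroup.eq.mpr (by simpa using hyD)
  have hg : g ∈ stabilizer G s := hsmul ▸ mem_top g
  rw [mem_stabilizer_set' (Set.toFinite s)] at hg
  simpa only [MulAction.Quotient.smul_mk, smul_eq_mul, mul_one] using
    hg (b := ((1 : G) : G ⧸ D)) (Set.mem_insert _ _)

theorem conj_notMem (hy : IsTriangular t y) (hyD : y ∈ D) (htD : t ∉ D) :
    t * y * t ∉ D := by
  rw [hy]
  exact fun h => htD ((Subgroup.mul_mem_cancel_left D (inv_mem hyD)).mp
    ((Subgroup.mul_mem_cancel_right D (inv_mem hyD)).mp h))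

theorem index_eq_three_of_conj_sq_mem (hgen : closure {t, y} = ⊤) (ht : t * t = 1)
    (hy : IsTriangular t y) (hyD : y ∈ D) (hZ : t * y ^ 2 * t ∈ D) (htD : t ∉ D) :
    D.index = 3 := by
  have hti : t⁻¹ = t := inv_eq_of_mul_eq_one_left ht
  rw [index, ← Nat.card_univ, Nat.card_coe_set_eq, Set.ncard_eq_three]
  refine ⟨((1 : G) : G ⧸ D), t, (y * t : G), ?_, ?_, ?_, Eq.symm <| Set.eq_univ_of_forall
    fun v => ?_⟩
  · rw [Ne, QuotientGroup.eq, inv_one, one_mul]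
    exact htD
  · rw [Ne, QuotientGroup.eq, inv_one, one_mul, Subgroup.mul_mem_cancel_left D hyD]
    exact htD
  · rw [Ne, QuotientGroup.eq, hti, ← mul_assoc]
    exact conj_notMem hy hyD htD
  · obtain ⟨g, rfl⟩ := QuotientGroup.mk_surjective v
    exact mk_mem_of_conj_sq_mem hgen ht hy hyD hZ g

end IndexThree

/-- A reflexive simple triangular map of density greater than `1 / 2`, presented by the half-turn
`t` about an edge and the rotation `y` about an endpoint of it. `stabilizer_eq_bot` encodes
simplicity: a rotation about the base vertex `⟨y⟩` fixing the neighbour `t⟨y⟩` is trivial.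
`pow_three_ne_one` excludes the tetrahedral map. -/
structure IsDenseTriangulation (t y : G) : Prop where
  closure_eq_top : closure {t, y} = ⊤
  mul_self : t * t = 1
  isTriangular : IsTriangular t y
  stabilizer_eq_bot : stabilizer (zpowers y) (t : Vertex y) = ⊥
  exists_reflection : ∃ φ : G ≃* G, φ t = t ∧ φ y = y⁻¹
  card_vertex_lt : Nat.card (Vertex y) < 2 * orderOf y
  pow_three_ne_one : y ^ 3 ≠ 1

/-- The group generated by the rotation about the base vertex `⟨y⟩` and the squared rotation about
its neighbour `t⟨y⟩`, for an involution `t`. The orbit of `⟨y⟩` under it contains every vertex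
aligned with `⟨y⟩`. -/
def diagonalSubgroup (t y : G) : Subgroup G := closure {y, t * y ^ 2 * t}

theorem mem_diagonalSubgroup (t y : G) : y ∈ diagonalSubgroup t y :=
  subset_closure (Set.mem_insert _ _)

theorem conj_sq_mem_diagonalSubgroup (t y : G) : t * y ^ 2 * t ∈ diagonalSubgroup t y :=
  subset_closure (Set.mem_insert_of_mem _ rfl)

theorem zpowers_le_diagonalSubgroup (t y : G) : zpowers y ≤ diagonalSubgroup t y :=
  zpowers_le.mpr (mem_diagonalSubgroup t y)

theorem diagonalSubgroup_le {t y : G} {D : Subgroup G} (hy : y ∈ D) (hZ : t * y ^ 2 * t ∈ D) :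
    diagonalSubgroup t y ≤ D :=
  (closure_le D).mpr (Set.pair_subset hy hZ)

theorem conj_mem_diagonalSubgroup {t y s : G} (ht : t * t = 1) (hs : s ∈ zpowers (y ^ 2)) :
    t * s * t ∈ diagonalSubgroup t y := by
  have hti : t⁻¹ = t := inv_eq_of_mul_eq_one_left ht
  obtain ⟨k, rfl⟩ := hs
  have hk : (t * y ^ 2 * t) ^ k = t * (y ^ 2) ^ k * t := by
    simpa only [hti] using conj_zpow (a := t) (b := y ^ 2) (i := k)
  exact hk ▸ zpow_mem (conj_sq_mem_diagonalSubgroup t y) k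

theorem mul_inv_mul_mem_diagonalSubgroup {t y w : G} (ht : t * t = 1) (hw : w ∈ zpowers (y ^ 2)) :
    t * y⁻¹ * (w * y * t) ∈ diagonalSubgroup t y := by
  have hcomm : Commute w y := commute_of_mem_zpowers (zpowers_pow_le y 2 hw) (mem_zpowers y)
  convert conj_mem_diagonalSubgroup ht hw using 1
  rw [hcomm.eq]
  group

theorem mul_inv_mul_conj_mem_diagonalSubgroup {t y w : G} (ht : t * t = 1) (hy : IsTriangular t y)
    (hw : w ∈ zpowers (y ^ 2)) : t * y⁻¹ * (t * (w * y) * t) ∈ diagonalSubgroup t y := by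
  have hcomm : Commute w y := commute_of_mem_zpowers (zpowers_pow_le y 2 hw) (mem_zpowers y)
  have hconj : t * y⁻¹ * t = y * t * y := by
    simpa only [IsTriangular, inv_inv] using hy.inv ht
  convert mul_mem (mem_diagonalSubgroup t y)
    (conj_mem_diagonalSubgroup ht (mul_mem hw (mem_zpowers (y ^ 2)))) using 1
  calc t * y⁻¹ * (t * (w * y) * t) = t * y⁻¹ * t * (w * y) * t := by group
    _ = y * (t * (y * w * y) * t) := by rw [hconj]; group
    _ = y * (t * (w * y ^ 2) * t) := by rw [← hcomm.eq, sq, mul_assoc w]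

namespace IsDenseTriangulation

variable {t y : G}

theorem inv_eq_self (h : IsDenseTriangulation t y) : t⁻¹ = t :=
  inv_eq_of_mul_eq_one_left h.mul_self

/-- Reflecting and inverting `t * a * t = b * t * c` give two factorisations of `t * a⁻¹ * t`, and
factorisations through `t` are unique. -/
theorem isTriangular_of_mem_orbit (h : IsDenseTriangulation t y) {a : G} (ha : a ∈ zpowers y)
    (hmem : ((t * a * t : G) : Vertex y) ∈ orbit (zpowers y) (t : Vertex y)) :
    IsTriangular t a := by
  have hti := h.inv_eq_self
  obtain ⟨φ, hφt, hφy⟩ := h.exists_reflection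
  have hφ : ∀ c ∈ zpowers y, φ c = c⁻¹ := by
    rintro _ ⟨k, rfl⟩
    simp only [map_zpow, hφy, inv_zpow]
  obtain ⟨b, hb, c, hc, hbc⟩ := mk_mem_orbit_mk_iff.mp hmem
  have hreflect : t * a⁻¹ * t = b⁻¹ * t * c⁻¹ := by
    simpa only [map_mul, hφt, hφ a ha, hφ b hb, hφ c hc] using congrArg φ hbc
  have hinv : t * a⁻¹ * t = c⁻¹ * t * b⁻¹ := by
    simpa only [mul_inv_rev, hti, mul_assoc] using congrArg (·⁻¹) hbc
  obtain rfl : b = c := inv_injective <| (eq_and_eq_of_mul_mul_eq h.stabilizer_eq_bot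
    (inv_mem hb) (inv_mem hc) (inv_mem hc) (inv_mem hb) (hreflect.symm.trans hinv)).1
  have hleft : t * b * t = b⁻¹ * t * a := by
    calc t * b * t = b⁻¹ * (b * t * b) * t := by group
      _ = b⁻¹ * t * a * (t * t) := by rw [← hbc]; group
      _ = b⁻¹ * t * a := by rw [h.mul_self, mul_one]
  have hright : t * b * t = a * t * b⁻¹ := by
    calc t * b * t = t * (b * t * b) * b⁻¹ := by group
      _ = t * t * a * t * b⁻¹ := by rw [← hbc]; group
      _ = a * t * b⁻¹ := by rw [h.mul_self, one_mul]
  have hab : a = b⁻¹ := (eq_and_eq_of_mul_mul_eq h.stabilizer_eq_bot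
    ha (inv_mem hb) (inv_mem hb) ha (hright.symm.trans hleft)).1
  rw [IsTriangular, hbc, hab, inv_inv]

theorem mk_conj_sq_notMem_orbit (h : IsDenseTriangulation t y) :
    ((t * y ^ 2 * t : G) : Vertex y) ∉ orbit (zpowers y) (t : Vertex y) := by
  intro hmem
  have hY := mem_zpowers y
  have hsq : IsTriangular t (y ^ 2) := h.isTriangular_of_mem_orbit (pow_mem hY 2) hmem
  have hyty : t * y ^ 2 * t = y * t * y := by
    calc t * y ^ 2 * t = (t * y * t) * (t * y * t) := by
          rw [conj_mul_conj h.mul_self, sq]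
      _ = y⁻¹ * (t * (y ^ 2)⁻¹ * t) * y⁻¹ := by rw [h.isTriangular]; group
      _ = y⁻¹ * (y ^ 2 * t * y ^ 2) * y⁻¹ := by
          rw [show t * (y ^ 2)⁻¹ * t = _ from hsq.inv h.mul_self, inv_inv]
      _ = y * t * y := by group
  have heq : (y ^ 2)⁻¹ = y := (eq_and_eq_of_mul_mul_eq h.stabilizer_eq_bot
    (inv_mem (pow_mem hY 2)) (inv_mem (pow_mem hY 2)) hY hY (hsq.symm.trans hyty)).1
  refine h.pow_three_ne_one ?_
  rw [pow_succ, mul_eq_one_iff_inv_eq]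
  exact heq

theorem notMem_normalizer_zpowers (h : IsDenseTriangulation t y) {a : G} (ha : a ∈ zpowers y)
    (ha1 : a ≠ 1) : t ∉ normalizer (zpowers a : Set G) := by
  intro ht
  refine ha1 (eq_one_of_conj_mem h.stabilizer_eq_bot ha ?_)
  rw [mem_normalizer_iff''] at ht
  exact zpowers_le.mpr ha ((ht a).mp (mem_zpowers a))

theorem exists_eq_mul_mul_of_notMem (h : IsDenseTriangulation t y) {g : G}
    (hg : g ∉ diagonalSubgroup t y) :
    ∃ a ∈ zpowers y, ∃ n ∈ diagonalSubgroup t y, g = a * t * n := by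
  rcases mk_mem_of_conj_sq_mem h.closure_eq_top h.mul_self h.isTriangular
    (mem_diagonalSubgroup t y) (conj_sq_mem_diagonalSubgroup t y) g with hmem | hmem | hmem
  all_goals have hmem := QuotientGroup.eq.mp hmem.symm
  · rw [inv_one, one_mul] at hmem
    exact absurd hmem hg
  · exact ⟨1, one_mem _, _, hmem, by group⟩
  · exact ⟨y, mem_zpowers y, _, hmem, by group⟩

theorem conj_mem_of_conj_mem (h : IsDenseTriangulation t y) {e g : G} (he : e ∈ zpowers y)
    (hg : g ∉ diagonalSubgroup t y) (heg : g⁻¹ * e * g ∈ zpowers y) :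
    t * e * t ∈ diagonalSubgroup t y := by
  obtain ⟨a, ha, n, hn, rfl⟩ := h.exists_eq_mul_mul_of_notMem hg
  have hconj : t * e * t = n * ((a * t * n)⁻¹ * e * (a * t * n)) * n⁻¹ := by
    calc t * e * t = t⁻¹ * (a⁻¹ * (e * a)) * t := by
          rw [(commute_of_mem_zpowers he ha).eq, inv_mul_cancel_left, h.inv_eq_self]
      _ = n * ((a * t * n)⁻¹ * e * (a * t * n)) * n⁻¹ := by group
  rw [hconj]
  exact mul_mem (mul_mem hn (zpowers_le_diagonalSubgroup t y heg)) (inv_mem hn)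

variable [Finite G]

theorem stabilizer_ne_bot (h : IsDenseTriangulation t y) {v : Vertex y}
    (hv : v ∉ orbit (zpowers y) (t : Vertex y)) : stabilizer (zpowers y) v ≠ ⊥ :=
  stabilizer_ne_bot_of_card_lt (by simpa only [Nat.card_zpowers] using h.card_vertex_lt)
    h.stabilizer_eq_bot hv

theorem notMem_diagonalSubgroup (h : IsDenseTriangulation t y) : t ∉ diagonalSubgroup t y := by
  obtain ⟨⟨a, ha⟩, haZ, ha1⟩ :=
    (bot_or_exists_ne_one _).resolve_left (h.stabilizer_ne_bot h.mk_conj_sq_notMem_orbit)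
  rw [mem_stabilizer_mk_iff] at haZ
  have hle : diagonalSubgroup t y ≤ normalizer (zpowers a : Set G) := by
    refine diagonalSubgroup_le (mem_normalizer_zpowers ha ?_) ?_
    · exact mul_mem (mul_mem (mem_zpowers y) ha) (inv_mem (mem_zpowers y))
    · exact inv_mem_iff.mp (mem_normalizer_zpowers ha (by rwa [inv_inv]))
  exact fun ht => h.notMem_normalizer_zpowers ha (fun h1 => ha1 (Subtype.ext h1)) (hle ht)

theorem index_diagonalSubgroup (h : IsDenseTriangulation t y) :
    (diagonalSubgroup t y).index = 3 :=
  index_eq_three_of_conj_sq_mem h.closure_eq_top h.mul_self h.isTriangular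
    (mem_diagonalSubgroup t y) (conj_sq_mem_diagonalSubgroup t y) h.notMem_diagonalSubgroup

theorem eq_diagonalSubgroup (h : IsDenseTriangulation t y) {D : Subgroup G}
    (hle : diagonalSubgroup t y ≤ D) (htD : t ∉ D) : D = diagonalSubgroup t y := by
  have hindex := relIndex_mul_index hle
  rw [index_eq_three_of_conj_sq_mem h.closure_eq_top h.mul_self h.isTriangular
      (hle (mem_diagonalSubgroup t y)) (hle (conj_sq_mem_diagonalSubgroup t y)) htD,
    h.index_diagonalSubgroup] at hindex
  exact le_antisymm (relIndex_eq_one.mp (by omega)) hle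

theorem card_vertex_eq (h : IsDenseTriangulation t y) :
    Nat.card (Vertex y) = 3 * (zpowers y).relIndex (diagonalSubgroup t y) := by
  rw [← index, ← relIndex_mul_index (zpowers_le_diagonalSubgroup t y), h.index_diagonalSubgroup,
    mul_comm]

/-- If `w * y` is not triangular, `t * w * y * t` lies outside the neighbourhood of `⟨y⟩`, so these
vertices together with the neighbours `w * y * t` inject into one block. -/
theorem ncard_not_isTriangular_add_card_le (h : IsDenseTriangulation t y) :
    {w : zpowers (y ^ 2) | ¬ IsTriangular t (w * y)}.ncard + Nat.card (zpowers (y ^ 2)) ≤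
      (zpowers y).relIndex (diagonalSubgroup t y) := by
  set f : zpowers (y ^ 2) → Vertex y := fun w => (w * y * t : G)
  set B : Set (zpowers (y ^ 2)) := {w | ¬ IsTriangular t (w * y)}
  have hY (w : zpowers (y ^ 2)) : w * y ∈ zpowers y :=
    mul_mem (zpowers_pow_le y 2 w.2) (mem_zpowers y)
  have hinj : f.Injective := fun w w' hww => Subtype.ext <| mul_right_cancel <|
    eq_of_mk_mul_eq h.stabilizer_eq_bot (hY w) (hY w') hww
  have htf (w : zpowers (y ^ 2)) : t • f w = (t * (w * y) * t : G) :=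
    congrArg QuotientGroup.mk (mul_assoc t (w * y) t).symm
  have hdisj : Disjoint (t • f '' B) (Set.range f) := by
    rw [Set.disjoint_left]
    rintro _ ⟨_, ⟨w, hw, rfl⟩, rfl⟩ ⟨w', hw'⟩
    refine hw (h.isTriangular_of_mem_orbit (hY w) ?_)
    rw [← htf, show t • f w = f w' from hw'.symm]
    exact mk_mem_orbit_mk_iff.mpr ⟨_, hY w', 1, one_mem _, (mul_one _).symm⟩
  have hsub : (t * y⁻¹) • (t • f '' B ∪ Set.range f) ⊆
      orbit (diagonalSubgroup t y) ((1 : G) : Vertex y) := by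
    rintro _ ⟨_, ⟨_, ⟨w, -, rfl⟩, rfl⟩ | ⟨w, rfl⟩, rfl⟩
    · simp only [htf]
      exact mk_mem_orbit_one (mul_inv_mul_conj_mem_diagonalSubgroup h.mul_self h.isTriangular w.2)
    · exact mk_mem_orbit_one (mul_inv_mul_mem_diagonalSubgroup h.mul_self w.2)
  calc B.ncard + Nat.card (zpowers (y ^ 2)) = (t • f '' B).ncard + (Set.range f).ncard := by
        rw [Set.ncard_smul_set, Set.ncard_image_of_injective B hinj,
          Set.ncard_range_of_injective hinj]
    _ = ((t * y⁻¹) • (t • f '' B ∪ Set.range f)).ncard := by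
        rw [Set.ncard_smul_set (t * y⁻¹), Set.ncard_union_eq hdisj]
    _ ≤ (zpowers y).relIndex (diagonalSubgroup t y) := by
        rw [← ncard_orbit_one]
        exact Set.ncard_le_ncard hsub

theorem three_mul_ncard_not_isTriangular_lt (h : IsDenseTriangulation t y) :
    3 * {w : zpowers (y ^ 2) | ¬ IsTriangular t (w * y)}.ncard < Nat.card (zpowers (y ^ 2)) := by
  have hle := h.ncard_not_isTriangular_add_card_le
  have hlt := h.card_vertex_lt
  have hsq := orderOf_le_two_mul_card_zpowers_sq y
  rw [h.card_vertex_eq] at hlt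
  omega

theorem exists_isTriangular (h : IsDenseTriangulation t y) :
    ∃ w ∈ zpowers (y ^ 2), IsTriangular t (w * y) ∧ IsTriangular t (w * y ^ 3) ∧
      IsTriangular t (w * y⁻¹) := by
  classical
  set s : zpowers (y ^ 2) := ⟨y ^ 2, mem_zpowers _⟩ with hs
  obtain ⟨w, hw⟩ := exists_forall_mul_notMem (T := {1, s, s⁻¹}) <|
    (Nat.mul_le_mul_left _ Finset.card_le_three).trans_lt
      (mul_comm 3 _ ▸ h.three_mul_ncard_not_isTriangular_lt)
  simp only [Finset.mem_insert, Finset.mem_singleton, forall_eq_or_imp, forall_eq,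
    Set.mem_ofPred_eq, not_not, mul_one, coe_mul, coe_inv, coe_one, hs] at hw
  refine ⟨w, w.2, hw.1, ?_, ?_⟩
  · simpa only [mul_assoc, ← pow_succ] using hw.2.1
  · convert hw.2.2 using 1
    group

theorem commute_pow_four (h : IsDenseTriangulation t y) : Commute (y ^ 4) (t * y ^ 2 * t) := by
  obtain ⟨w, hw, hw₁, hw₃, hw'⟩ := h.exists_isTriangular
  have hcomm : Commute w y :=
    commute_of_mem_zpowers (zpowers_pow_le y 2 hw) (mem_zpowers y)
  have hsq : Commute (w ^ 2) (t * y ^ 2 * t) := hw₁.commute_sq_conj_sq h.mul_self hcomm hw'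
  have hsq' : Commute ((w * y ^ 2) ^ 2) (t * y ^ 2 * t) := by
    refine IsTriangular.commute_sq_conj_sq h.mul_self
      (hcomm.mul_left (Commute.pow_self y 2)) ?_ ?_
    · rwa [mul_assoc, ← pow_succ]
    · rwa [sq, ← mul_assoc, mul_inv_cancel_right]
  rw [(hcomm.pow_right 2).mul_pow, ← pow_mul] at hsq'
  simpa only [inv_mul_cancel_left] using hsq.inv_left.mul_left hsq'

theorem commute_pow_four_of_mem (h : IsDenseTriangulation t y) {n : G}
    (hn : n ∈ diagonalSubgroup t y) : Commute (y ^ 4) n := by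
  have hle : diagonalSubgroup t y ≤ centralizer {y ^ 4} := by
    refine diagonalSubgroup_le ?_ ?_ <;> rw [mem_centralizer_singleton_iff]
    · exact (Commute.self_pow y 4).eq
    · exact h.commute_pow_four.eq.symm
  exact (mem_centralizer_singleton_iff.mp (hle hn)).symm

theorem mem_zpowers_sq_of_conj_mem (h : IsDenseTriangulation t y) {e : G} (he : e ∈ zpowers y)
    (hte : t * e * t ∈ diagonalSubgroup t y) : e ∈ zpowers (y ^ 2) := by
  obtain ⟨k, rfl⟩ := he
  have hsq (j : ℤ) : y ^ (2 * j) ∈ zpowers (y ^ 2) := ⟨j, by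
    simp only [zpow_mul, zpow_ofNat]⟩
  obtain ⟨j, rfl | rfl⟩ := Int.even_or_odd' k
  · exact hsq j
  · simp only [zpow_add_one] at hte
    rw [← conj_mul_conj h.mul_self, Subgroup.mul_mem_cancel_left _
      (conj_mem_diagonalSubgroup h.mul_self (hsq j))] at hte
    exact absurd hte
      (conj_notMem h.isTriangular (mem_diagonalSubgroup t y) h.notMem_diagonalSubgroup)

theorem sq_eq_one_of_conj_mem (h : IsDenseTriangulation t y) {e g : G} (he : e ∈ zpowers y)
    (hg : g ∉ diagonalSubgroup t y) (heg : g⁻¹ * e * g ∈ zpowers y) : e ^ 2 = 1 := by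
  by_contra hne
  have heY : e ^ 2 ∈ zpowers y := pow_mem he 2
  have hcomm {n : G} (hn : n ∈ diagonalSubgroup t y) : Commute (e ^ 2) n := by
    obtain ⟨j, rfl⟩ := h.mem_zpowers_sq_of_conj_mem he (h.conj_mem_of_conj_mem he hg heg)
    convert (h.commute_pow_four_of_mem hn).zpow_left j using 1
    group
  have hle : diagonalSubgroup t y ≤ normalizer (zpowers (e ^ 2) : Set G) := fun n hn =>
    mem_normalizer_zpowers heY (by rwa [← (hcomm hn).eq, mul_inv_cancel_right])
  refine hg (h.eq_diagonalSubgroup hle (h.notMem_normalizer_zpowers heY hne) ▸ ?_)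
  refine inv_mem_iff.mp (mem_normalizer_zpowers heY ?_)
  have hconj : g⁻¹ * e ^ 2 * g = (g⁻¹ * e * g) ^ 2 := by
    simp only [sq]
    group
  rw [inv_inv, hconj]
  exact pow_mem heg 2

theorem card_stabilizer_le_two (h : IsDenseTriangulation t y) {g : G}
    (hg : g ∉ diagonalSubgroup t y) :
    Nat.card (stabilizer (zpowers y) (g : Vertex y)) ≤ 2 := by
  classical
  have := Fintype.ofFinite (zpowers y)
  have hsub : (stabilizer (zpowers y) (g : Vertex y) : Set (zpowers y)) ⊆
      {e | e ^ 2 = 1} := fun e he => Subtype.ext <|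
    h.sq_eq_one_of_conj_mem e.2 hg (mem_stabilizer_mk_iff.mp he)
  have hle := IsCyclic.card_pow_eq_one_le (α := zpowers y) two_pos
  rw [← Set.ncard_coe_finset, Finset.coe_filter_univ] at hle
  exact (Set.ncard_le_ncard hsub).trans hle

theorem three_lt_card_stabilizer (h : IsDenseTriangulation t y) {g : G}
    (hg : g ∉ diagonalSubgroup t y)
    (hgt : (g : Vertex y) ∉ orbit (zpowers y) (t : Vertex y)) :
    3 < Nat.card (stabilizer (zpowers y) (g : Vertex y)) := by
  have ht := h.notMem_diagonalSubgroup
  have hle := zpowers_le_diagonalSubgroup t y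
  have hunion : ((orbit (zpowers y) (t : Vertex y) ∪ orbit (zpowers y) (g : Vertex y)) ∪
      orbit (diagonalSubgroup t y) ((1 : G) : Vertex y)).ncard ≤ Nat.card (Vertex y) :=
    Set.ncard_le_card _
  rw [Set.ncard_union_eq (Set.disjoint_union_left.mpr
      ⟨disjoint_orbit_mk_orbit_one hle ht, disjoint_orbit_mk_orbit_one hle hg⟩),
    Set.ncard_union_eq (disjoint_orbit_of_notMem hgt), ncard_orbit_one, ← index_stabilizer,
    ← index_stabilizer, h.stabilizer_eq_bot, index_bot, Nat.card_zpowers,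
    h.card_vertex_eq] at hunion
  have hlt := h.card_vertex_lt
  rw [h.card_vertex_eq] at hlt
  have horbit := card_mul_index (stabilizer (zpowers y) (g : Vertex y))
  rw [Nat.card_zpowers] at horbit
  by_contra! hcard
  have hmul := Nat.mul_le_mul_right (stabilizer (zpowers y) (g : Vertex y)).index hcard
  omega

theorem mk_mem_orbit_iff (h : IsDenseTriangulation t y) {g : G} :
    (g : Vertex y) ∈ orbit (zpowers y) (t : Vertex y) ↔ g ∉ diagonalSubgroup t y := by
  constructor
  · rintro hmem hg
    exact Set.disjoint_left.mp (disjoint_orbit_mk_orbit_one (zpowers_le_diagonalSubgroup t y)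
      h.notMem_diagonalSubgroup) hmem (mk_mem_orbit_one hg)
  · intro hg
    by_contra hgt
    exact absurd (h.three_lt_card_stabilizer hg hgt)
      (not_lt.mpr ((h.card_stabilizer_le_two hg).trans (by norm_num)))

end IsDenseTriangulation

section Translation

variable {x y : G}

theorem notMem_zpowers_of_isSimple (hsimple : IsSimple x y) : x * y ∉ zpowers y := fun hmem =>
  hsimple.1 1 <| QuotientGroup.eq.mpr <| by simpa only [inv_one, one_mul] using hmem

theorem stabilizer_eq_bot_of_isSimple (hsimple : IsSimple x y) (hxy : (x * y) ^ 2 = 1) :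
    stabilizer (zpowers y) ((x * y : G) : Vertex y) = ⊥ := by
  rw [eq_bot_iff]
  rintro ⟨a, ha⟩ hstab
  have hone : ((a : G) : Vertex y) = (1 : G) :=
    QuotientGroup.eq.mpr (mul_mem (inv_mem ha) (one_mem _))
  have hsame : ((a * x * y : G) : Vertex y) = (1 * x * y : G) := by
    rw [mul_assoc, one_mul]
    exact hstab
  obtain ⟨k, hk⟩ : a⁻¹ * 1 ∈ zpowers (x * y) :=
    QuotientGroup.eq.mp (hsimple.2 a 1 (by rw [hone, hsame]))
  have hak : (x * y) ^ k = a⁻¹ := by simpa only [mul_one] using hk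
  have hsq : (x * y) ^ (2 : ℤ) = 1 := mod_cast hxy
  obtain ⟨j, rfl | rfl⟩ := Int.even_or_odd' k
  · rw [zpow_mul, hsq, one_zpow] at hak
    exact Subtype.ext (inv_eq_one.mp hak.symm)
  · rw [zpow_add_one, zpow_mul, hsq, one_zpow, one_mul] at hak
    exact absurd (hak ▸ inv_mem ha) (notMem_zpowers_of_isSimple hsimple)

theorem isTriangular_mul_of_pow_three (hx : x ^ 3 = 1) (hxy : (x * y) ^ 2 = 1) :
    IsTriangular (x * y) y := by
  have hinv : x * y = y⁻¹ * x⁻¹ := by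
    rw [← mul_inv_rev, eq_inv_iff_mul_eq_one, ← sq, hxy]
  calc x * y * y * (x * y) = y⁻¹ * x⁻¹ * y * (y⁻¹ * x⁻¹) := by rw [← hinv]
    _ = y⁻¹ * (x ^ 3)⁻¹ * x := by group
    _ = y⁻¹ * (x * y) * y⁻¹ := by rw [hx]; group

theorem exists_reflection_of_isReflexive (hrefl : IsReflexive x y) (hxy : (x * y) ^ 2 = 1) :
    ∃ φ : G ≃* G, φ (x * y) = x * y ∧ φ y = y⁻¹ := by
  obtain ⟨σ, hx, hy⟩ := hrefl
  refine ⟨σ.trans (MulAut.conj y⁻¹), ?_, ?_⟩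
  · have hinv : (x * y)⁻¹ = x * y := inv_eq_of_mul_eq_one_left (sq (x * y) ▸ hxy)
    simp only [MulEquiv.trans_apply, MulAut.conj_apply, map_mul, hx, hy]
    rw [← hinv]
    group
  · simp only [MulEquiv.trans_apply, MulAut.conj_apply, hy]
    group

theorem card_vertex_lt_of_card_lt [Finite G] (hden : Nat.card G < 2 * orderOf y ^ 2) :
    Nat.card (Vertex y) < 2 * orderOf y := by
  have hcard := card_mul_index (zpowers y)
  rw [Nat.card_zpowers, index] at hcard
  refine Nat.lt_of_mul_lt_mul_left (a := orderOf y) ?_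
  calc orderOf y * Nat.card (Vertex y) = Nat.card G := hcard
    _ < 2 * orderOf y ^ 2 := hden
    _ = orderOf y * (2 * orderOf y) := by ring

theorem pow_three_ne_one_of_card [Finite G] (hx : orderOf x = 3) (ht : orderOf (x * y) = 2)
    (hden₁ : Nat.card G < 2 * orderOf y ^ 2) (hden₂ : 3 * orderOf y ^ 2 ≤ 2 * Nat.card G) :
    y ^ 3 ≠ 1 := by
  intro hy
  have hcard₃ : 3 ∣ Nat.card G := hx ▸ orderOf_dvd_natCard x
  have hcard₂ : 2 ∣ Nat.card G := ht ▸ orderOf_dvd_natCard (x * y)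
  obtain hq | hq := (Nat.dvd_prime Nat.prime_three).mp (orderOf_dvd_of_pow_eq_one hy)
  all_goals
    rw [hq] at hden₁ hden₂
    omega

theorem isDenseTriangulation [Finite G] (hgen : closure {x, y} = ⊤) (hxy : (x * y) ^ 2 = 1)
    (hrefl : IsReflexive x y) (hsimple : IsSimple x y) (hden₁ : Nat.card G < 2 * orderOf y ^ 2)
    (hden₂ : 3 * orderOf y ^ 2 ≤ 2 * Nat.card G) (hx : orderOf x = 3) :
    IsDenseTriangulation (x * y) y where
  closure_eq_top := by
    rw [eq_top_iff, ← hgen, closure_le, Set.pair_subset_iff]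
    have hy : y ∈ closure {x * y, y} := subset_closure (Set.mem_insert_of_mem _ rfl)
    exact ⟨(Subgroup.mul_mem_cancel_right _ hy).mp (subset_closure (Set.mem_insert _ _)), hy⟩
  mul_self := sq (x * y) ▸ hxy
  isTriangular := isTriangular_mul_of_pow_three (hx ▸ pow_orderOf_eq_one x) hxy
  stabilizer_eq_bot := stabilizer_eq_bot_of_isSimple hsimple hxy
  exists_reflection := exists_reflection_of_isReflexive hrefl hxy
  card_vertex_lt := card_vertex_lt_of_card_lt hden₁
  pow_three_ne_one := pow_three_ne_one_of_card hx
    (orderOf_eq_prime hxy fun h => notMem_zpowers_of_isSimple hsimple (h ▸ one_mem _)) hden₁ hden₂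

theorem mk_mem_orbit_of_adj (hxy : (x * y) ^ 2 = 1) {g k : G}
    (hgk : Adj x y (g : Vertex y) (k : Vertex y)) :
    ((g⁻¹ * k : G) : Vertex y) ∈ orbit (zpowers y) ((x * y : G) : Vertex y) := by
  obtain ⟨-, c, hc⟩ := hgk
  refine mk_mem_orbit_mk_iff.mpr ?_
  rcases Set.pair_eq_pair_iff.mp hc with ⟨hg, hk⟩ | ⟨hg, hk⟩
  all_goals
    refine ⟨_, QuotientGroup.eq.mp hg, _, inv_mem (QuotientGroup.eq.mp hk), ?_⟩
  · group
  · calc g⁻¹ * k = g⁻¹ * c * 1 * (c⁻¹ * k) := by group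
      _ = g⁻¹ * c * (x * y) ^ 2 * (c⁻¹ * k) := by rw [hxy]
      _ = g⁻¹ * (c * x * y) * (x * y) * (k⁻¹ * c)⁻¹ := by rw [sq]; group

theorem adj_of_mk_mem_orbit (hsimple : IsSimple x y) {g k : G}
    (hgk : ((g⁻¹ * k : G) : Vertex y) ∈ orbit (zpowers y) ((x * y : G) : Vertex y)) :
    Adj x y (g : Vertex y) (k : Vertex y) := by
  obtain ⟨a, ha, b, hb, hab⟩ := mk_mem_orbit_mk_iff.mp hgk
  have hk : k = g * a * x * y * b := by
    rw [← mul_inv_cancel_left g k, hab]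
    group
  rw [hk, QuotientGroup.mk_mul_of_mem _ hb, ← QuotientGroup.mk_mul_of_mem g ha]
  exact ⟨hsimple.1 (g * a), g * a, rfl⟩

end Translation

/-- The block of imprimitivity containing a vertex, for the block system whose member through the
base vertex `⟨y⟩` is its orbit under `diagonalSubgroup t y`; aligned vertices share their block. -/
def diagonalClass (t y : G) : Vertex y → G ⧸ diagonalSubgroup t y :=
  quotientMapOfLE (zpowers_le_diagonalSubgroup t y)

theorem diagonalClass_mk_eq_iff {t y g h : G} :
    diagonalClass t y g = diagonalClass t y h ↔ g⁻¹ * h ∈ diagonalSubgroup t y :=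
  QuotientGroup.eq

theorem diagonalClass_eq_of_diagNeighbor {x y : G} (hxy : (x * y) ^ 2 = 1) {v v' : Vertex y}
    (hv : DiagNeighbor x y v v') : diagonalClass (x * y) y v = diagonalClass (x * y) y v' := by
  obtain ⟨w, hw, rfl⟩ := hv
  obtain ⟨k, rfl⟩ := QuotientGroup.mk_surjective v
  obtain ⟨l, rfl⟩ := QuotientGroup.mk_surjective w
  obtain ⟨a, ha, b, hb, hab⟩ := mk_mem_orbit_mk_iff.mp (mk_mem_orbit_of_adj hxy hw)
  have haN := zpowers_le_diagonalSubgroup (x * y) y ha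
  have hb2 : Commute b (y ^ 2) := commute_of_mem_zpowers hb (pow_mem (mem_zpowers y) 2)
  have hti : (x * y)⁻¹ = x * y := inv_eq_of_mul_eq_one_left (sq (x * y) ▸ hxy)
  refine diagonalClass_mk_eq_iff (h := (l * y * l⁻¹) ^ 2 * k) |>.mpr ?_
  have hconj : k⁻¹ * ((l * y * l⁻¹) ^ 2 * k) = a * (x * y * y ^ 2 * (x * y)) * a⁻¹ := by
    calc k⁻¹ * ((l * y * l⁻¹) ^ 2 * k) = (k⁻¹ * l) * y ^ 2 * (k⁻¹ * l)⁻¹ := by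
          rw [conj_pow]; group
      _ = a * (x * y * (b * y ^ 2 * b⁻¹) * (x * y)⁻¹) * a⁻¹ := by rw [hab]; group
      _ = a * (x * y * y ^ 2 * (x * y)) * a⁻¹ := by
          rw [hb2.eq, mul_inv_cancel_right, hti]
  rw [hconj]
  exact mul_mem (mul_mem haN (conj_sq_mem_diagonalSubgroup _ y)) (inv_mem haN)

theorem diagonalClass_eq_of_aligned {x y : G} (hxy : (x * y) ^ 2 = 1) {v z : Vertex y}
    (hv : Aligned x y v z) : diagonalClass (x * y) y v = diagonalClass (x * y) y z := by
  induction hv with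
  | refl => rfl
  | tail _ hstep ih => exact ih.trans (diagonalClass_eq_of_diagNeighbor hxy hstep)

theorem IsDenseTriangulation.adj_iff [Finite G] {x y : G} (h : IsDenseTriangulation (x * y) y)
    (hsimple : IsSimple x y) {v w : Vertex y} :
    Adj x y v w ↔ diagonalClass (x * y) y v ≠ diagonalClass (x * y) y w := by
  obtain ⟨g, rfl⟩ := QuotientGroup.mk_surjective v
  obtain ⟨k, rfl⟩ := QuotientGroup.mk_surjective w
  rw [Ne, diagonalClass_mk_eq_iff, ← h.mk_mem_orbit_iff]
  exact ⟨mk_mem_orbit_of_adj (sq (x * y) ▸ h.mul_self), adj_of_mk_mem_orbit hsimple⟩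

theorem ne_of_card_eq_three {α : Type*} (hcard : Nat.card α = 3) {a b c : α}
    (hcover : ∀ p, p = a ∨ p = b ∨ p = c) : a ≠ b := by
  rintro rfl
  have huniv : (Set.univ : Set α) ⊆ {a, c} := fun p _ => (hcover p).elim Or.inl id
  have hle := (Set.ncard_le_ncard huniv).trans (Set.ncard_insert_le a {c})
  rw [Set.ncard_univ, hcard, Set.ncard_singleton] at hle
  omega

/-- If `V = V_v ∪ V_w ∪ V_u` then the set of neighbours of `v` is exactly `V_w ∪ V_u`. -/
theorem neighbours_eq_other_classes
    (G : Type*) [Group G] [Finite G] (x y : G)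
    (hgen : Subgroup.closure {x, y} = ⊤) (hxy : (x * y) ^ 2 = 1)
    (hrefl : IsReflexive x y) (hsimple : IsSimple x y)
    (hden₁ : 2 * orderOf y ^ 2 > Nat.card G)
    (hden₂ : 3 * orderOf y ^ 2 ≤ 2 * Nat.card G)
    (hp : orderOf x = 3) (hnt : ¬ IsTet G x y)
    (v w u : Vertex y)
    (hcover : ∀ z : Vertex y, Aligned x y v z ∨ Aligned x y w z ∨ Aligned x y u z) :
    ∀ z : Vertex y, Adj x y v z ↔ (Aligned x y w z ∨ Aligned x y u z) := by
  have h := isDenseTriangulation hgen hxy hrefl hsimple hden₁ hden₂ hp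
  set π := diagonalClass (x * y) y
  have hcard : Nat.card (G ⧸ diagonalSubgroup (x * y) y) = 3 := h.index_diagonalSubgroup
  have hclass (p : G ⧸ diagonalSubgroup (x * y) y) : p = π v ∨ p = π w ∨ p = π u := by
    obtain ⟨g, rfl⟩ := QuotientGroup.mk_surjective p
    change π g = π v ∨ π g = π w ∨ π g = π u
    exact (hcover g).imp (fun hv => (diagonalClass_eq_of_aligned hxy hv).symm)
      (Or.imp (fun hw => (diagonalClass_eq_of_aligned hxy hw).symm)
        fun hu => (diagonalClass_eq_of_aligned hxy hu).symm)
  have hvw : π v ≠ π w := ne_of_card_eq_three hcard hclass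
  have hvu : π v ≠ π u := ne_of_card_eq_three hcard fun p => (hclass p).imp_right Or.symm
  intro z
  rw [h.adj_iff hsimple]
  constructor
  · intro hz
    exact (hcover z).resolve_left fun hv => hz (diagonalClass_eq_of_aligned hxy hv)
  · rintro (hw | hu)
    · exact diagonalClass_eq_of_aligned hxy hw ▸ hvw
    · exact diagonalClass_eq_of_aligned hxy hu ▸ hvu

end RegularMap
end

section
/- Let (G,x,y) encode a reflexive regular map that is simple, has p = 3, is not the tetrahedral map tet, and satisfies 3q² = 2|G| (density exactly 2/3). Then the even period satisfies T = 2. -/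
namespace RegularMap

variable {G : Type*} [Group G]

/-!
Let `q` be the order of `y`. The squared rotations `a = y²`, `b = x a x⁻¹`, `c = x⁻¹ a x` about the
vertices of a face satisfy `a b c = 1`, and `N = ⟨a, b⟩` is the normal closure of `a`. The
reflection shows that the vertex `b⟨y⟩` is not adjacent to `⟨y⟩`. The neighbours of `⟨y⟩` form an
orbit of length `q` under `⟨y⟩`, so the orbit of `b⟨y⟩` is shorter: there are only `3q/2` vertices.
Hence `b` normalizes a subgroup of prime order of `⟨y⟩`, and so does `N`; by simplicity `x` does
not, so `x ∉ N`. Thus `N` has index at least `6` and order at most `q²/4 = |a||b|`, and every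
element of `N` is uniquely a power of `a` times a power of `b`.

A count of cosets of `⟨a⟩` in `N` gives a normal subgroup `⟨α⟩ ≤ ⟨a⟩` of prime order. The symmetries
of `N` coming from the face rotation and the reflection force `α` to be central, and they descend to
the quotient of `N` by the central subgroup `⟨α, x α x⁻¹⟩`. By induction `⁅a, b⁆` lies in this
subgroup, where it is inverted and fixed by the reflection and fixed by the face rotation; this
forces `⁅a, b⁆ = 1`. So all squared rotations commute, and each of them fixes every vertex
diagonally aligned with its own.
-/

open Subgroup
open scoped commutatorElement

section General

theorem mem_zpowers_of_orderOf_dvd [Finite G] {a s t : G} (hs : s ∈ zpowers a)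
    (ht : t ∈ zpowers a) (h : orderOf t ∣ orderOf s) : t ∈ zpowers s := by
  obtain ⟨k, rfl⟩ := mem_powers_iff_mem_zpowers.mpr hs
  obtain ⟨l, rfl⟩ := mem_powers_iff_mem_zpowers.mpr ht
  have hgcd : (orderOf a).gcd k ∣ l := by
    have hk : 0 < orderOf a / (orderOf a).gcd k := orderOf_pow a (n := k) ▸ orderOf_pos (a ^ k)
    rw [orderOf_pow, orderOf_pow, Nat.div_dvd_iff_dvd_mul (Nat.gcd_dvd_left _ _)
      (Nat.gcd_pos_of_pos_left _ (orderOf_pos a))] at h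
    refine (Nat.dvd_of_mul_dvd_mul_right hk ?_).trans (Nat.gcd_dvd_right (orderOf a) l)
    rwa [Nat.mul_div_cancel' (Nat.gcd_dvd_left _ _)]
  obtain ⟨m, rfl⟩ := hgcd
  have hbezout : a ^ (orderOf a).gcd k = (a ^ k) ^ (orderOf a).gcdB k := by
    rw [← zpow_natCast a (Nat.gcd _ _), Nat.gcd_eq_gcd_ab, zpow_add, zpow_mul, zpow_mul]
    simp [pow_orderOf_eq_one]
  simp only [pow_mul, hbezout]
  exact pow_mem (zpow_mem (mem_zpowers _) _) _

theorem eq_of_sq_eq_one_of_mem_zpowers [Finite G] {a s t : G} (hs : s ∈ zpowers a)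
    (ht : t ∈ zpowers a) (hs2 : s ^ 2 = 1) (ht2 : t ^ 2 = 1) (hs1 : s ≠ 1) (ht1 : t ≠ 1) :
    s = t := by
  have hst : orderOf t = orderOf s := by
    rw [orderOf_eq_prime hs2 hs1, orderOf_eq_prime ht2 ht1]
  obtain ⟨k, rfl⟩ := mem_zpowers_of_orderOf_dvd hs ht hst.dvd
  rcases Int.even_or_odd' k with ⟨m, rfl | rfl⟩
  · exact absurd (by simp [zpow_mul, hs2]) ht1
  · simp [zpow_add, zpow_mul, hs2]

theorem exists_prime_orderOf_mem_normalizer [Finite G] {a s g : G} (hs : s ∈ zpowers a)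
    (hs1 : s ≠ 1) (hsg : g⁻¹ * s * g ∈ zpowers a) :
    ∃ t ∈ zpowers a, (orderOf t).Prime ∧ g ∈ normalizer (zpowers t : Set G) := by
  obtain ⟨p, hp, hps⟩ := Nat.exists_prime_and_dvd (mt orderOf_eq_one_iff.mp hs1)
  set m := orderOf s / p
  have hm : orderOf (s ^ m) = p := orderOf_pow_orderOf_div (orderOf_pos s).ne' hps
  have hconj : MulAut.conj g⁻¹ (s ^ m) ∈ zpowers (s ^ m) := by
    refine mem_zpowers_of_orderOf_dvd (pow_mem hs m) ?_ (MulEquiv.orderOf_eq _ _).dvd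
    rw [map_pow, MulAut.conj_apply, inv_inv]
    exact pow_mem hsg m
  refine ⟨s ^ m, pow_mem hs m, hm ▸ hp, inv_mem_iff.mp (mem_normalizer_fintype ?_)⟩
  rintro _ ⟨k, rfl⟩
  rw [SetLike.mem_coe, ← MulAut.conj_apply, map_zpow]
  exact zpow_mem hconj k

theorem commute_of_mem_zpowers_s15 {a s t : G} (hs : s ∈ zpowers a) (ht : t ∈ zpowers a) :
    Commute s t := by
  obtain ⟨i, rfl⟩ := hs
  obtain ⟨j, rfl⟩ := ht
  exact (Commute.refl a).zpow_zpow i j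

theorem zpowers_le_normalizer_zpowers {a t : G} (ht : t ∈ zpowers a) :
    zpowers a ≤ normalizer (zpowers t : Set G) :=
  le_normalizer_iff.mpr fun s hs k hk => by
    rwa [(commute_of_mem_zpowers_s15 hs (zpowers_le_of_mem ht hk)).mul_inv_cancel]

theorem ncard_orbit_mk_eq_card {A : Subgroup G} {g : G}
    (h : ∀ s ∈ A, g⁻¹ * s * g ∈ A → s = 1) :
    (MulAction.orbit A (g : G ⧸ A)).ncard = Nat.card A := by
  have hstab : MulAction.stabilizer A (g : G ⧸ A) = ⊥ := by
    refine (eq_bot_iff_forall _).mpr fun s hs => Subtype.ext (h s s.2 ?_)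
    have hs' : ((s * g : G) : G ⧸ A) = g := hs
    simpa [mul_assoc] using inv_mem (QuotientGroup.eq.mp hs')
  rw [← MulAction.index_stabilizer, hstab, index_bot]

theorem ncard_orbit_add_ncard_orbit_le {X : Type*} [MulAction G X] [Finite X] {v w : X}
    (h : v ∉ MulAction.orbit G w) :
    (MulAction.orbit G v).ncard + (MulAction.orbit G w).ncard ≤ Nat.card X := by
  have hdisj : Disjoint (MulAction.orbit G v) (MulAction.orbit G w) :=
    (MulAction.orbit.eq_or_disjoint v w).resolve_left fun he =>
      h (MulAction.orbit_eq_iff.mp he)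
  rw [← Set.ncard_union_eq hdisj]
  exact Set.ncard_le_card _

theorem semiconjBy_pow_zpow_pow {g s : G} {r : ℤ} (h : SemiconjBy g s (s ^ r)) (n : ℕ) :
    SemiconjBy (g ^ n) s (s ^ r ^ n) := by
  induction n with
  | zero => simp
  | succ n ih =>
    rw [pow_succ, pow_succ, zpow_mul]
    exact (ih.zpow_right r).mul_left h

theorem commute_pow_of_semiconjBy_zpow {g s t : G} {r : ℤ} {n : ℕ} (hs : SemiconjBy g s (s ^ r))
    (ht : SemiconjBy g t (t ^ r)) (hst : orderOf s = orderOf t) (h : Commute (g ^ n) s) :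
    Commute (g ^ n) t := by
  have hs' : s ^ r ^ n = s ^ (1 : ℤ) := by
    rw [zpow_one]
    exact mul_right_cancel ((semiconjBy_pow_zpow_pow hs n).symm.trans h)
  have ht' : t ^ r ^ n = t ^ (1 : ℤ) := by
    rwa [zpow_eq_zpow_iff_modEq, hst, ← zpow_eq_zpow_iff_modEq] at hs'
  have := semiconjBy_pow_zpow_pow ht n
  rwa [ht', zpow_one] at this

theorem natCard_quotient_lt [Finite G] {K : Subgroup G} (hK : K ≠ ⊥) :
    Nat.card (G ⧸ K) < Nat.card G := by
  rw [K.card_eq_card_quotient_mul_card_subgroup]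
  exact lt_mul_of_one_lt_right Nat.card_pos (K.one_lt_card_iff_ne_bot.mpr hK)

theorem commutatorElement_inv_inv_of_mem_center {g h : G} (hgh : ⁅g, h⁆ ∈ center G) :
    ⁅g⁻¹, h⁻¹⁆ = ⁅g, h⁆ :=
  calc ⁅g⁻¹, h⁻¹⁆ = (h * g)⁻¹ * (⁅g, h⁆ * (h * g)) := by simp only [commutatorElement_def]; group
    _ = ⁅g, h⁆ := by rw [← mem_center_iff.mp hgh, inv_mul_cancel_left]

theorem isComplement'_of_disjoint_of_card_le [Finite G] {A B : Subgroup G} (h : Disjoint A B)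
    (hcard : Nat.card G ≤ Nat.card A * Nat.card B) : IsComplement' A B := by
  refine isComplement'_of_card_mul_and_disjoint (le_antisymm ?_ hcard) h
  rw [← Nat.card_prod]
  exact Nat.card_le_card_of_injective _ (mul_injective_of_disjoint h)

theorem isComplement'_map_mk' {A B N : Subgroup G} [N.Normal] (h : IsComplement' A B)
    (hN : ∀ g ∈ N, ∃ u ∈ A ⊓ N, ∃ v ∈ B, u * v = g) :
    IsComplement' (A.map (QuotientGroup.mk' N)) (B.map (QuotientGroup.mk' N)) := by
  refine isComplement'_of_disjoint_and_mul_eq_univ ?_ ?_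
  · rw [disjoint_def]
    rintro _ ⟨s, hs, rfl⟩ ⟨t, ht, hst⟩
    obtain ⟨u, hu, v, hv, huv⟩ := hN _ (QuotientGroup.eq.mp hst.symm)
    have huniq := h.1 (a₁ := (⟨s⁻¹, inv_mem hs⟩, ⟨t, ht⟩)) (a₂ := (⟨u, hu.1⟩, ⟨v, hv⟩)) huv.symm
    have hsu : s⁻¹ = u := congrArg (fun z => (z.1 : G)) huniq
    exact (QuotientGroup.eq_one_iff s).mpr (inv_mem_iff.mp (hsu ▸ hu.2))
  · refine Set.eq_univ_of_forall fun q => ?_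
    obtain ⟨g, rfl⟩ := QuotientGroup.mk'_surjective N q
    obtain ⟨⟨u, v⟩, rfl⟩ := h.2 g
    exact ⟨_, mem_map_of_mem _ u.2, _, mem_map_of_mem _ v.2, (map_mul _ _ _).symm⟩

end General


/-- Generators `a, b, c` of `H` with `a * b * c = 1`, permuted cyclically by the endomorphism `θ`,
the first two of which are inverted by the endomorphism `τ`, such that every element of `H` is
uniquely a power of `a` times a power of `b`. In the application `a`, `b`, `c` are the squared
rotations about the vertices of a face, `θ` is the rotation about this face and `τ` is a
reflection. -/
structure IsTriality {H : Type*} [Group H] (θ τ : H →* H) (a b c : H) : Prop where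
  map_fst : θ a = b
  map_snd : θ b = c
  mul_mul_eq_one : a * b * c = 1
  reflect_fst : τ a = a⁻¹
  reflect_snd : τ b = b⁻¹
  isComplement' : IsComplement' (zpowers a) (zpowers b)

namespace IsTriality

variable {H : Type*} [Group H] {θ τ : H →* H} {a b c α : H}

theorem map_thd (h : IsTriality θ τ a b c) : θ c = a := by
  have hmul : b * c * θ c = 1 := by
    simpa [h.map_fst, h.map_snd] using congrArg θ h.mul_mul_eq_one
  rw [← inv_eq_of_mul_eq_one_right hmul]
  exact inv_eq_of_mul_eq_one_left (by rw [← mul_assoc, h.mul_mul_eq_one])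

theorem map_map_map (h : IsTriality θ τ a b c) (g : H) : θ (θ (θ g)) = g := by
  obtain ⟨⟨⟨_, i, rfl⟩, ⟨_, j, rfl⟩⟩, rfl⟩ := h.isComplement'.2 g
  simp [h.map_fst, h.map_snd, h.map_thd]

theorem injective (h : IsTriality θ τ a b c) : Function.Injective θ :=
  Function.LeftInverse.injective (g := θ ∘ θ) h.map_map_map

theorem surjective (h : IsTriality θ τ a b c) : Function.Surjective θ := fun g =>
  ⟨θ (θ g), h.map_map_map g⟩

theorem orderOf_map (h : IsTriality θ τ a b c) (g : H) : orderOf (θ g) = orderOf g :=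
  orderOf_injective θ h.injective g

theorem disjoint_snd_thd (h : IsTriality θ τ a b c) : Disjoint (zpowers b) (zpowers c) := by
  have := disjoint_map h.injective h.isComplement'.disjoint
  rwa [MonoidHom.map_zpowers, MonoidHom.map_zpowers, h.map_fst, h.map_snd] at this

theorem disjoint_fst_thd (h : IsTriality θ τ a b c) : Disjoint (zpowers a) (zpowers c) := by
  have := disjoint_map h.injective h.disjoint_snd_thd
  rw [MonoidHom.map_zpowers, MonoidHom.map_zpowers, h.map_thd, h.map_snd] at this
  exact this.symm

theorem map_mem_zpowers_snd (h : IsTriality θ τ a b c) (hα : α ∈ zpowers a) :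
    θ α ∈ zpowers b := by
  rw [← h.map_fst, ← MonoidHom.map_zpowers]
  exact mem_map_of_mem θ hα

theorem map_map_mem_zpowers_thd (h : IsTriality θ τ a b c) (hα : α ∈ zpowers a) :
    θ (θ α) ∈ zpowers c := by
  rw [← h.map_snd, ← MonoidHom.map_zpowers]
  exact mem_map_of_mem θ (h.map_mem_zpowers_snd hα)

theorem reflect_eq_inv_of_mem_fst (h : IsTriality θ τ a b c) (hα : α ∈ zpowers a) :
    τ α = α⁻¹ := by
  obtain ⟨k, rfl⟩ := hα
  simp [h.reflect_fst]

theorem reflect_eq_inv_of_mem_snd (h : IsTriality θ τ a b c) {β : H} (hβ : β ∈ zpowers b) :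
    τ β = β⁻¹ := by
  obtain ⟨k, rfl⟩ := hβ
  simp [h.reflect_snd]

theorem eq_top_of_mem (h : IsTriality θ τ a b c) {K : Subgroup H} (ha : a ∈ K) (hb : b ∈ K) :
    K = ⊤ :=
  top_le_iff.mp (h.isComplement'.sup_eq_top ▸
    sup_le (zpowers_le_of_mem ha) (zpowers_le_of_mem hb))

theorem mem_center (h : IsTriality θ τ a b c) {z : H} (ha : Commute a z) (hb : Commute b z) :
    z ∈ center H := by
  have htop := h.eq_top_of_mem (K := centralizer {z})
    (mem_centralizer_singleton_iff.mpr ha) (mem_centralizer_singleton_iff.mpr hb)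
  exact mem_center_iff.mpr fun g => mem_centralizer_singleton_iff.mp (htop ▸ mem_top g)

theorem exists_conj_mem_zpowers [Finite H] (h : IsTriality θ τ a b c) (ha : a ≠ 1) :
    ∃ s ∈ zpowers a, s ≠ 1 ∧ b⁻¹ * s * b ∈ zpowers a := by
  by_contra! hcon
  have hb : (b : H ⧸ zpowers a) ∉ MulAction.orbit (zpowers a) ((1 : H) : H ⧸ zpowers a) := by
    rintro ⟨s, hs⟩
    have hsb : (s : H)⁻¹ * b ∈ zpowers a := by simpa using QuotientGroup.eq.mp hs
    have hb1 : b = 1 := disjoint_def.mp h.isComplement'.disjoint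
      ((mul_mem_cancel_left (inv_mem s.2)).mp hsb) (mem_zpowers b)
    exact ha (h.injective (by rw [h.map_fst, hb1, map_one]))
  have hcard := ncard_orbit_add_ncard_orbit_le hb
  rw [ncard_orbit_mk_eq_card fun s hs hsb => by_contra fun hs1 => hcon s hs hs1 hsb,
    ← index_eq_card, h.isComplement'.symm.index_eq_card, Nat.card_zpowers, Nat.card_zpowers,
    ← h.map_fst, h.orderOf_map] at hcard
  have hpos : 0 < (MulAction.orbit (zpowers a) ((1 : H) : H ⧸ zpowers a)).ncard :=
    (Set.ncard_pos).mpr (MulAction.nonempty_orbit _)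
  omega

theorem exists_prime_orderOf_normal [Finite H] (h : IsTriality θ τ a b c) (ha : a ≠ 1) :
    ∃ α ∈ zpowers a, (orderOf α).Prime ∧ (zpowers α).Normal := by
  obtain ⟨s, hs, hs1, hsb⟩ := h.exists_conj_mem_zpowers ha
  obtain ⟨α, hα, hp, hb⟩ := exists_prime_orderOf_mem_normalizer hs hs1 hsb
  exact ⟨α, hα, hp, normalizer_eq_top_iff.mp
    (h.eq_top_of_mem (zpowers_le_normalizer_zpowers hα (mem_zpowers a)) hb)⟩

theorem exists_semiconjBy (h : IsTriality θ τ a b c) (hα : α ∈ zpowers a)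
    (hN : (zpowers α).Normal) :
    ∃ r : ℤ, SemiconjBy b α (α ^ r) ∧ SemiconjBy c α (α ^ r) := by
  obtain ⟨r, hr⟩ := hN.conj_mem α (mem_zpowers α) b
  have hb : SemiconjBy b α (α ^ r) := eq_mul_inv_iff_mul_eq.mp hr |>.symm
  have hb' : SemiconjBy b⁻¹ α (α ^ r) := by
    have := hb.map τ
    rw [map_zpow, h.reflect_snd, h.reflect_eq_inv_of_mem_fst hα, inv_zpow] at this
    simpa using this.inv_right
  have ha : Commute a⁻¹ α := (commute_of_mem_zpowers_s15 (mem_zpowers a) hα).inv_left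
  refine ⟨r, hb, ?_⟩
  rw [← inv_eq_of_mul_eq_one_right h.mul_mul_eq_one, mul_inv_rev]
  exact hb'.mul_left ha

theorem orderOf_map_map (h : IsTriality θ τ a b c) (g : H) : orderOf (θ (θ g)) = orderOf g := by
  rw [h.orderOf_map, h.orderOf_map]

theorem normal_zpowers_map (h : IsTriality θ τ a b c) {g : H} (hN : (zpowers g).Normal) :
    (zpowers (θ g)).Normal :=
  MonoidHom.map_zpowers θ g ▸ hN.map θ h.surjective

theorem exists_mul_eq_map_map [Finite H] (h : IsTriality θ τ a b c) (hα : α ∈ zpowers a)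
    (hN : (zpowers α).Normal) :
    ∃ u ∈ zpowers α, ∃ v ∈ zpowers (θ α), u * v = θ (θ α) := by
  -- `b` raises `α` and `θ (θ α)` to the same power, so a power of `b` centralizing one of them
  -- centralizes the other; this makes the two factors of `θ (θ α)` commute.
  obtain ⟨r, hbα, hcα⟩ := h.exists_semiconjBy hα hN
  have hγ := h.map_map_mem_zpowers_thd hα
  have hbγ : SemiconjBy b (θ (θ α)) (θ (θ α) ^ r) := by
    simpa [h.map_thd, h.map_fst] using (hcα.map θ).map θ
  have hαγ : Commute α (θ (θ α)) :=
    commute_of_normal_of_disjoint _ _ hN (h.normal_zpowers_map (h.normal_zpowers_map hN))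
      (h.disjoint_fst_thd.mono (zpowers_le_of_mem hα) (zpowers_le_of_mem hγ)) _ _
      (mem_zpowers _) (mem_zpowers _)
  obtain ⟨⟨⟨u, hu⟩, ⟨v, hv⟩⟩, huv : u * v = _⟩ := h.isComplement'.2 (θ (θ α))
  have hvα : Commute v α := by
    rw [← inv_mul_eq_iff_eq_mul.mpr huv.symm]
    exact (commute_of_mem_zpowers_s15 hu hα).inv_left.mul_left hαγ.symm
  have hvγ : Commute v (θ (θ α)) := by
    obtain ⟨j, rfl⟩ := mem_powers_iff_mem_zpowers.mpr hv
    exact commute_pow_of_semiconjBy_zpow hbα hbγ (h.orderOf_map_map α).symm hvα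
  have huv_comm : Commute u v := by
    rw [← mul_inv_eq_iff_eq_mul.mpr huv.symm]
    exact hvγ.symm.mul_left (Commute.refl v).inv_left
  have hpow : u ^ orderOf α * v ^ orderOf α = 1 := by
    rw [← huv_comm.mul_pow, huv, ← h.orderOf_map_map, pow_orderOf_eq_one]
  obtain ⟨hu1, hv1⟩ := disjoint_iff_mul_eq_one.mp h.isComplement'.disjoint (pow_mem hu _)
    (pow_mem hv _) hpow
  exact ⟨u, mem_zpowers_of_orderOf_dvd hα hu (orderOf_dvd_of_pow_eq_one hu1), v,
    mem_zpowers_of_orderOf_dvd (h.map_mem_zpowers_snd hα) hv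
      (h.orderOf_map α ▸ orderOf_dvd_of_pow_eq_one hv1), huv⟩

theorem mem_center_of_prime_orderOf [Finite H] (h : IsTriality θ τ a b c) (hα : α ∈ zpowers a)
    (hp : (orderOf α).Prime) (hN : (zpowers α).Normal) : α ∈ center H := by
  -- Conjugation by `a` raises both `θ (θ α) = u * v` and `v` to the power `r`, hence also `u`,
  -- which `a` centralizes. So `r` is `1` modulo the order of `u`, which is that of `α`.
  obtain ⟨r, hbα, hcα⟩ := h.exists_semiconjBy hα hN
  obtain ⟨u, hu, v, hv, huv⟩ := h.exists_mul_eq_map_map hα hN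
  have haβ : SemiconjBy a (θ α) (θ α ^ r) := by simpa [h.map_thd] using hcα.map θ
  have hav : SemiconjBy a v (v ^ r) := by
    obtain ⟨k, rfl⟩ := hv
    simpa [← zpow_mul, mul_comm] using haβ.zpow_right k
  have haγ : SemiconjBy a (u * v) ((u * v) ^ r) := by
    simpa [h.map_thd, h.map_snd, huv] using (hbα.map θ).map θ
  have huv_comm : Commute u v := commute_of_normal_of_disjoint _ _ hN (h.normal_zpowers_map hN)
    (h.isComplement'.disjoint.mono (zpowers_le_of_mem hα)
      (zpowers_le_of_mem (h.map_mem_zpowers_snd hα))) _ _ hu hv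
  have hur : u ^ r = u := by
    have hau : SemiconjBy a u u := commute_of_mem_zpowers_s15 (mem_zpowers a) (zpowers_le_of_mem hα hu)
    have := mul_right_cancel (haγ.symm.trans (hau.mul_right hav))
    rwa [huv_comm.mul_zpow, mul_left_inj] at this
  have hu1 : u ≠ 1 := by
    rintro rfl
    rw [one_mul] at huv
    have hγ : θ (θ α) = 1 := disjoint_def.mp h.disjoint_snd_thd
      (huv ▸ zpowers_le_of_mem (h.map_mem_zpowers_snd hα) hv) (h.map_map_mem_zpowers_thd hα)
    rw [← orderOf_eq_one_iff, h.orderOf_map_map] at hγ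
    exact hp.ne_one hγ
  have hαu : orderOf u = orderOf α :=
    ((Nat.dvd_prime hp).mp (orderOf_dvd_of_mem_zpowers hu)).resolve_left
      (mt orderOf_eq_one_iff.mp hu1)
  have hαr : α ^ r = α ^ (1 : ℤ) := by
    rw [zpow_eq_zpow_iff_modEq, ← hαu, ← zpow_eq_zpow_iff_modEq, zpow_one, hur]
  rw [hαr, zpow_one] at hbα
  exact h.mem_center (commute_of_mem_zpowers_s15 (mem_zpowers a) hα) hbα

theorem map_mem_center (h : IsTriality θ τ a b c) {z : H} (hz : z ∈ center H) :
    θ z ∈ center H := by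
  refine mem_center_iff.mpr fun g => ?_
  obtain ⟨g, rfl⟩ := h.surjective g
  rw [← map_mul, mem_center_iff.mp hz, map_mul]

theorem exists_subgroup_le_center [Finite H] (h : IsTriality θ τ a b c) (ha : a ≠ 1) :
    ∃ K : Subgroup H, K ≤ center H ∧ K ≠ ⊥ ∧ K ≤ K.comap θ ∧ (∀ z ∈ K, τ z = z⁻¹) ∧
      ∀ z ∈ K, ∃ u ∈ zpowers a ⊓ K, ∃ v ∈ zpowers b, u * v = z := by
  obtain ⟨α, hα, hp, hN⟩ := h.exists_prime_orderOf_normal ha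
  obtain ⟨u, hu, v, hv, huv⟩ := h.exists_mul_eq_map_map hα hN
  have hβ := h.map_mem_zpowers_snd hα
  have hαC := h.mem_center_of_prime_orderOf hα hp hN
  have hKC : zpowers α ⊔ zpowers (θ α) ≤ center H :=
    sup_le (zpowers_le_of_mem hαC) (zpowers_le_of_mem (h.map_mem_center hαC))
  refine ⟨zpowers α ⊔ zpowers (θ α), hKC, ?_, ?_, fun z hz => ?_, fun z hz => ?_⟩
  · refine ne_bot_of_le_ne_bot (zpowers_ne_bot.mpr ?_) le_sup_left
    rintro rfl
    exact hp.ne_one orderOf_one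
  · refine sup_le (zpowers_le_of_mem ?_) (zpowers_le_of_mem ?_)
    · exact mem_sup_right (mem_zpowers _)
    · exact mem_comap.mpr (huv ▸ mul_mem (mem_sup_left hu) (mem_sup_right hv))
  · obtain ⟨s, hs, t, ht, rfl⟩ := mem_sup_of_normal_left.mp hz
    rw [map_mul, h.reflect_eq_inv_of_mem_fst (zpowers_le_of_mem hα hs),
      h.reflect_eq_inv_of_mem_snd (zpowers_le_of_mem hβ ht), ← mul_inv_rev,
      mem_center_iff.mp (hKC (mem_sup_left hs))]
  · obtain ⟨s, hs, t, ht, rfl⟩ := mem_sup_of_normal_left.mp hz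
    exact ⟨s, ⟨zpowers_le_of_mem hα hs, mem_sup_left hs⟩, t, zpowers_le_of_mem hβ ht, rfl⟩

theorem quotient (h : IsTriality θ τ a b c) {K : Subgroup H} [K.Normal]
    (hθ : K ≤ K.comap θ) (hτ : K ≤ K.comap τ)
    (hK : ∀ z ∈ K, ∃ u ∈ zpowers a ⊓ K, ∃ v ∈ zpowers b, u * v = z) :
    IsTriality (QuotientGroup.map K K θ hθ) (QuotientGroup.map K K τ hτ) (a : H ⧸ K) b c where
  map_fst := congrArg _ h.map_fst
  map_snd := congrArg _ h.map_snd
  mul_mul_eq_one := congrArg ((↑) : H → H ⧸ K) h.mul_mul_eq_one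
  reflect_fst := congrArg _ h.reflect_fst
  reflect_snd := congrArg _ h.reflect_snd
  isComplement' := by
    simpa [MonoidHom.map_zpowers] using isComplement'_map_mk' h.isComplement' hK

theorem map_commutatorElement_fst_snd (h : IsTriality θ τ a b c) (hg : ⁅a, b⁆ ∈ center H) :
    θ ⁅a, b⁆ = ⁅a, b⁆ := by
  rw [map_commutatorElement, h.map_fst, h.map_snd, ← inv_eq_of_mul_eq_one_right h.mul_mul_eq_one,
    ← commutatorElement_inv_inv_of_mem_center hg]
  simp only [commutatorElement_def]
  group

theorem sq_commutatorElement_fst_snd (h : IsTriality θ τ a b c) (hg : ⁅a, b⁆ ∈ center H)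
    (hτ : τ ⁅a, b⁆ = ⁅a, b⁆⁻¹) : ⁅a, b⁆ ^ 2 = 1 := by
  rw [map_commutatorElement, h.reflect_fst, h.reflect_snd,
    commutatorElement_inv_inv_of_mem_center hg] at hτ
  rw [sq, ← eq_inv_iff_mul_eq_one, ← hτ]

theorem eq_one_of_sq_eq_one [Finite H] (h : IsTriality θ τ a b c) {g : H} (hg : g ∈ center H)
    (hsq : g ^ 2 = 1) (hθ : θ g = g) : g = 1 := by
  obtain ⟨⟨⟨u, hu⟩, ⟨v, hv⟩⟩, rfl : u * v = g⟩ := h.isComplement'.2 g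
  have huv : Commute u v :=
    mul_left_cancel (a := u) (by simpa only [mul_assoc] using mem_center_iff.mp hg u)
  rw [huv.mul_pow] at hsq
  obtain ⟨hu2, hv2⟩ := disjoint_iff_mul_eq_one.mp h.isComplement'.disjoint (pow_mem hu 2)
    (pow_mem hv 2) hsq
  have hu' := h.map_mem_zpowers_snd hu
  rw [map_mul] at hθ
  rcases eq_or_ne u 1 with rfl | hu1
  · simp only [map_one, one_mul] at hθ ⊢
    refine disjoint_def.mp h.disjoint_snd_thd hv ?_
    rw [← hθ, ← h.map_snd, ← MonoidHom.map_zpowers]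
    exact mem_map_of_mem θ hv
  rcases eq_or_ne v 1 with rfl | hv1
  · simp only [map_one, mul_one] at hθ ⊢
    exact disjoint_def.mp h.isComplement'.disjoint hu (hθ ▸ hu')
  obtain rfl : θ u = v := eq_of_sq_eq_one_of_mem_zpowers hu' hv (by rw [← map_pow, hu2, map_one])
    hv2 ((map_ne_one_iff θ h.injective).mpr hu1) hv1
  rw [huv.eq, mul_right_inj] at hθ
  exact absurd (disjoint_def.mp h.disjoint_fst_thd hu (hθ ▸ h.map_map_mem_zpowers_thd hu)) hu1

theorem commute_of_commutatorElement_mem_center [Finite H] (h : IsTriality θ τ a b c)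
    (hg : ⁅a, b⁆ ∈ center H) (hτ : τ ⁅a, b⁆ = ⁅a, b⁆⁻¹) : Commute a b :=
  commutatorElement_eq_one_iff_commute.mp <|
    h.eq_one_of_sq_eq_one hg (h.sq_commutatorElement_fst_snd hg hτ)
      (h.map_commutatorElement_fst_snd hg)

theorem commute {H : Type*} [Group H] [Finite H] {θ τ : H →* H} {a b c : H}
    (h : IsTriality θ τ a b c) : Commute a b := by
  by_cases ha : a = 1
  · exact ha ▸ Commute.one_left b
  obtain ⟨K, hKC, hK1, hθ, hτ, hK⟩ := h.exists_subgroup_le_center ha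
  have hKN : K.Normal :=
    ⟨fun z hz g => by rwa [mem_center_iff.mp (hKC hz) g, mul_inv_cancel_right]⟩
  have hquot : Commute (a : H ⧸ K) b :=
    (h.quotient hθ (fun z hz => by simpa [hτ z hz] using hz) hK).commute
  have hmem : ⁅a, b⁆ ∈ K :=
    (QuotientGroup.eq_one_iff _).mp (commutatorElement_eq_one_iff_commute.mpr hquot)
  exact h.commute_of_commutatorElement_mem_center (hKC hmem) (hτ _ hmem)
termination_by Nat.card H
decreasing_by exact natCard_quotient_lt hK1

end IsTriality

section Rotations

variable {x y : G}

theorem mul_mul_eq_inv (hxy : (x * y) ^ 2 = 1) : y * x * y = x⁻¹ := by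
  refine eq_inv_of_mul_eq_one_right ?_
  rw [← hxy, sq]
  group

theorem inv_mul_inv_of_pow_three (hx : x ^ 3 = 1) : x⁻¹ * x⁻¹ = x := by
  rw [← mul_inv_rev]
  exact inv_eq_of_mul_eq_one_left (by rw [← pow_three, hx])

theorem conj_conj_sq_by_face (hx : x ^ 3 = 1) : x * (x * y ^ 2 * x⁻¹) * x⁻¹ = x⁻¹ * y ^ 2 * x :=
  calc x * (x * y ^ 2 * x⁻¹) * x⁻¹ = (x⁻¹ * x⁻¹)⁻¹ * y ^ 2 * (x⁻¹ * x⁻¹) := by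
        rw [mul_inv_rev, inv_inv]
        simp only [mul_assoc]
    _ = x⁻¹ * y ^ 2 * x := by rw [inv_mul_inv_of_pow_three hx]

theorem conj_conj_sq_by_vertex (hxy : (x * y) ^ 2 = 1) :
    y * (x * y ^ 2 * x⁻¹) * y⁻¹ = x⁻¹ * y ^ 2 * x :=
  calc y * (x * y ^ 2 * x⁻¹) * y⁻¹ = y * x * y * y ^ 2 * (y * x * y)⁻¹ := by group
    _ = x⁻¹ * y ^ 2 * x := by rw [mul_mul_eq_inv hxy, inv_inv]

theorem sq_mul_conj_sq_mul_conj_sq (hx : x ^ 3 = 1) (hxy : (x * y) ^ 2 = 1) :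
    y ^ 2 * (x * y ^ 2 * x⁻¹) * (x⁻¹ * y ^ 2 * x) = 1 :=
  calc y ^ 2 * (x * y ^ 2 * x⁻¹) * (x⁻¹ * y ^ 2 * x)
      = y * (y * x * y) * y * (x⁻¹ * x⁻¹) * y * (y * x * y) * y⁻¹ := by
        simp only [sq]
        group
    _ = y * x⁻¹ * y * x * y * x⁻¹ * y⁻¹ := by
      rw [mul_mul_eq_inv hxy, inv_mul_inv_of_pow_three hx]
    _ = y * x⁻¹ * (y * x * y) * x⁻¹ * y⁻¹ := by simp only [mul_assoc]
    _ = y * (x⁻¹ * x⁻¹ * x⁻¹) * y⁻¹ := by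
      rw [mul_mul_eq_inv hxy]
      simp only [mul_assoc]
    _ = 1 := by rw [inv_mul_inv_of_pow_three hx]; simp

theorem IsSimple.eq_one_of_conj_mem_zpowers (hsimple : IsSimple x y) (hxy : (x * y) ^ 2 = 1) {s : G}
    (hs : s ∈ zpowers y) (hsx : x⁻¹ * s * x ∈ zpowers y) : s = 1 := by
  have hv : ((1 : G) : Vertex y) = s := QuotientGroup.eq.mpr (by simpa using hs)
  have hw : ((1 * x * y : G) : Vertex y) = (s * x * y : G) := by
    rw [QuotientGroup.eq]
    convert mul_mem (mul_mem (inv_mem (mem_zpowers y)) hsx) (mem_zpowers y) using 1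
    group
  obtain ⟨j, hj⟩ := QuotientGroup.eq.mp (hsimple.2 1 s (by rw [hv, hw]))
  have hxy' : (x * y) ^ (2 : ℤ) = 1 := mod_cast hxy
  rcases Int.even_or_odd' j with ⟨k, rfl | rfl⟩
  · simpa [zpow_mul, hxy'] using hj.symm
  · have hs' : x * y = s := by simpa [zpow_add, zpow_mul, hxy'] using hj
    exact absurd (by rw [one_mul, hs', hv]) (hsimple.1 1)

theorem IsReflexive.mk_conj_sq_notMem_orbit (hrefl : IsReflexive x y) (hsimple : IsSimple x y)
    (hx : x ^ 3 = 1) (hxy : (x * y) ^ 2 = 1) (hy : Even (orderOf y)) :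
    ((x * y ^ 2 * x⁻¹ : G) : Vertex y) ∉ MulAction.orbit (zpowers y) (x : Vertex y) := by
  -- Applying the reflection to `x * y ^ 2 * x⁻¹ = y ^ i * x * y ^ j` gives `y ^ (2 * i + 1) = 1`.
  rintro ⟨⟨_, i, rfl⟩, hi⟩
  obtain ⟨j, hj : y ^ j = (y ^ i * x)⁻¹ * (x * y ^ 2 * x⁻¹)⟩ := QuotientGroup.eq.mp hi
  obtain ⟨σ, hσx, hσy⟩ := hrefl
  have hb : x * y ^ 2 * x⁻¹ = y ^ i * x * y ^ j := by rw [hj, mul_inv_cancel_left]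
  have hσb : y ^ 2 * (x * y ^ 2 * x⁻¹) = σ (x * y ^ 2 * x⁻¹) := by
    rw [eq_inv_of_mul_eq_one_left (sq_mul_conj_sq_mul_conj_sq hx hxy)]
    simp [hσx, hσy, mul_assoc]
  have hyi : y ^ (2 * i + 1) = x * y ^ (1 - 2 * j) * x⁻¹ := by
    rw [hb, map_mul, map_mul, map_zpow, map_zpow, hσx, hσy, ← mul_mul_eq_inv hxy] at hσb
    calc y ^ (2 * i + 1) = y ^ (i - 1) * (y ^ 2 * (y ^ i * x * y ^ j)) * y ^ (-j) * x⁻¹ := by group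
      _ = x * y ^ (1 - 2 * j) * x⁻¹ := by rw [hσb, inv_zpow, inv_zpow]; group
  have hs : y ^ (2 * i + 1) = 1 := by
    refine hsimple.eq_one_of_conj_mem_zpowers hxy ⟨_, rfl⟩ ⟨1 - 2 * j, ?_⟩
    simp [hyi, mul_assoc]
  rw [← orderOf_dvd_iff_zpow_eq_one] at hs
  have hdvd := (Int.natCast_dvd_natCast.mpr hy.two_dvd).trans hs
  push_cast at hdvd
  omega

theorem IsReflexive.exists_conj_mem_zpowers [Finite G] (hrefl : IsReflexive x y)
    (hsimple : IsSimple x y) (hx : x ^ 3 = 1) (hxy : (x * y) ^ 2 = 1) (hy : Even (orderOf y))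
    (hV : Nat.card (Vertex y) < 2 * orderOf y) :
    ∃ s ∈ zpowers y, s ≠ 1 ∧ (x * y ^ 2 * x⁻¹)⁻¹ * s * (x * y ^ 2 * x⁻¹) ∈ zpowers y := by
  by_contra! hcon
  have hcard := ncard_orbit_add_ncard_orbit_le (hrefl.mk_conj_sq_notMem_orbit hsimple hx hxy hy)
  rw [ncard_orbit_mk_eq_card fun s hs hsb => by_contra fun hs1 => hcon s hs hs1 hsb,
    ncard_orbit_mk_eq_card fun s => hsimple.eq_one_of_conj_mem_zpowers hxy,
    Nat.card_zpowers] at hcard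
  change Nat.card (G ⧸ zpowers y) < _ at hV
  omega

end Rotations

section SquaredRotations

variable {x y : G}

theorem sq_mem_normalClosure_sq (y : G) : y ^ 2 ∈ normalClosure {y ^ 2} :=
  subset_normalClosure rfl

theorem conj_sq_mem_normalClosure_sq (x y : G) : x * y ^ 2 * x⁻¹ ∈ normalClosure {y ^ 2} :=
  normalClosure_normal.conj_mem _ (sq_mem_normalClosure_sq y) x

theorem closure_sq_conj_sq_eq_normalClosure [Finite G] (hgen : closure {x, y} = ⊤)
    (hx : x ^ 3 = 1) (hxy : (x * y) ^ 2 = 1) :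
    closure {y ^ 2, x * y ^ 2 * x⁻¹} = normalClosure {y ^ 2} := by
  set K := closure {y ^ 2, x * y ^ 2 * x⁻¹} with hK
  have haK : y ^ 2 ∈ K := subset_closure (by simp)
  have hbK : x * y ^ 2 * x⁻¹ ∈ K := subset_closure (by simp)
  have hcK : x⁻¹ * y ^ 2 * x ∈ K := by
    rw [← inv_eq_of_mul_eq_one_right (sq_mul_conj_sq_mul_conj_sq hx hxy)]
    exact inv_mem (mul_mem haK hbK)
  have hnormalizer {g : G} (ha : g * y ^ 2 * g⁻¹ ∈ K) (hb : g * (x * y ^ 2 * x⁻¹) * g⁻¹ ∈ K) :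
      g ∈ normalizer (K : Set G) := by
    have hle : K ≤ K.comap (MulAut.conj g).toMonoidHom := by
      rw [hK, closure_le]
      rintro _ (rfl | rfl)
      exacts [ha, hb]
    exact mem_normalizer_fintype hle
  have hxyK : ({x, y} : Set G) ⊆ normalizer (K : Set G) := by
    rintro _ (rfl | rfl)
    · exact hnormalizer hbK (conj_conj_sq_by_face hx ▸ hcK)
    · exact hnormalizer (by rwa [((Commute.refl _).pow_right 2).mul_inv_cancel])
        (conj_conj_sq_by_vertex hxy ▸ hcK)
  have : K.Normal := normalizer_eq_top_iff.mp (top_le_iff.mp (hgen ▸ (closure_le _).mpr hxyK))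
  refine le_antisymm ?_ (normalClosure_le_normal (by simpa using haK))
  rw [closure_le]
  rintro _ (rfl | rfl)
  exacts [sq_mem_normalClosure_sq y, conj_sq_mem_normalClosure_sq x y]

theorem IsSimple.notMem_closure_of_conj_mem [Finite G] (hsimple : IsSimple x y)
    (hxy : (x * y) ^ 2 = 1) {b s : G} (hs : s ∈ zpowers y) (hs1 : s ≠ 1)
    (hsb : b⁻¹ * s * b ∈ zpowers y) : x ∉ closure {y ^ 2, b} := by
  intro hxN
  obtain ⟨t, ht, hp, hb⟩ := exists_prime_orderOf_mem_normalizer hs hs1 hsb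
  have hle : closure {y ^ 2, b} ≤ normalizer (zpowers t : Set G) := by
    rw [closure_le]
    rintro _ (rfl | rfl)
    exacts [zpowers_le_normalizer_zpowers ht (pow_mem (mem_zpowers y) 2), hb]
  have htx : x⁻¹ * t * x ∈ zpowers y :=
    zpowers_le_of_mem ht ((mem_normalizer_iff''.mp (hle hxN) t).mp (mem_zpowers t))
  exact hp.ne_one (orderOf_eq_one_iff.mpr (hsimple.eq_one_of_conj_mem_zpowers hxy ht htx))

theorem six_le_index_of_notMem [Finite G] {N : Subgroup G} [N.Normal] (hx : x ^ 3 = 1)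
    (hxy : (x * y) ^ 2 = 1) (hy : y ^ 2 ∈ N) (hxN : x ∉ N) : 6 ≤ N.index := by
  have hx' : orderOf (x : G ⧸ N) = 3 := by
    refine orderOf_eq_prime ?_ (mt (QuotientGroup.eq_one_iff x).mp hxN)
    rw [← QuotientGroup.mk_pow, hx, QuotientGroup.mk_one]
  have hyN : y ∉ N := by
    intro hyN
    have hxy' : x = y * (x * y * x⁻¹) :=
      calc x = x⁻¹ * x⁻¹ := (inv_mul_inv_of_pow_three hx).symm
        _ = y * x * y * x⁻¹ := by rw [mul_mul_eq_inv hxy]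
        _ = y * (x * y * x⁻¹) := by simp only [mul_assoc]
    exact hxN (hxy' ▸ mul_mem hyN (Normal.conj_mem ‹_› y hyN x))
  have hy' : orderOf (y : G ⧸ N) = 2 := by
    refine orderOf_eq_prime ?_ (mt (QuotientGroup.eq_one_iff y).mp hyN)
    exact (QuotientGroup.eq_one_iff _).mpr hy
  have h3 : 3 ∣ N.index := hx' ▸ orderOf_dvd_natCard _
  have h2 : 2 ∣ N.index := hy' ▸ orderOf_dvd_natCard _
  exact Nat.le_of_dvd (Nat.pos_of_ne_zero FiniteIndex.index_ne_zero)
    (Nat.Coprime.mul_dvd_of_dvd_of_dvd (by decide) h3 h2)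

end SquaredRotations

section Density

variable {x y : G}

theorem IsSimple.disjoint_zpowers_conj (hsimple : IsSimple x y) (hxy : (x * y) ^ 2 = 1) :
    Disjoint (zpowers y) (zpowers (x * y * x⁻¹)) := by
  rw [disjoint_def]
  rintro _ hs ⟨k, rfl⟩
  refine hsimple.eq_one_of_conj_mem_zpowers hxy hs ⟨k, ?_⟩
  simp only [conj_zpow]
  group

theorem IsSimple.isComplement'_zpowers [Finite G] (hsimple : IsSimple x y)
    (hxy : (x * y) ^ 2 = 1) (hy : Even (orderOf y)) {N : Subgroup G} {a b : N}
    (ha : (a : G) = y ^ 2) (hb : (b : G) = x * y ^ 2 * x⁻¹)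
    (hcard : 4 * Nat.card N ≤ orderOf y ^ 2) : IsComplement' (zpowers a) (zpowers b) := by
  have hdisj : Disjoint ((zpowers a).map N.subtype) ((zpowers b).map N.subtype) := by
    rw [MonoidHom.map_zpowers, MonoidHom.map_zpowers, coe_subtype, ha, hb, ← conj_pow]
    exact (hsimple.disjoint_zpowers_conj hxy).mono (zpowers_le_of_mem (pow_mem (mem_zpowers _) 2))
      (zpowers_le_of_mem (pow_mem (mem_zpowers _) 2))
  refine isComplement'_of_disjoint_of_card_le ?_ ?_
  · exact disjoint_def.mpr fun hs ht => Subtype.ext <|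
      disjoint_def.mp hdisj (mem_map_of_mem N.subtype hs) (mem_map_of_mem N.subtype ht)
  · have hconj : orderOf (x * y ^ 2 * x⁻¹) = orderOf (y ^ 2) := (MulAut.conj x).orderOf_eq (y ^ 2)
    obtain ⟨n, hn⟩ := hy.two_dvd
    rw [Nat.card_zpowers, Nat.card_zpowers, ← orderOf_coe a, ← orderOf_coe b, ha, hb, hconj,
      orderOf_pow_of_dvd two_ne_zero hy.two_dvd, hn, Nat.mul_div_cancel_left n two_pos]
    rw [hn] at hcard
    linarith

theorem IsReflexive.exists_isTriality (hrefl : IsReflexive x y) (hx : x ^ 3 = 1)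
    (hxy : (x * y) ^ 2 = 1) {a b : normalClosure {y ^ 2}} (ha : (a : G) = y ^ 2)
    (hb : (b : G) = x * y ^ 2 * x⁻¹) (hcompl : IsComplement' (zpowers a) (zpowers b)) :
    ∃ θ τ c, IsTriality θ τ a b c := by
  obtain ⟨σ, hσx, hσy⟩ := hrefl
  set ρ : G →* G := (MulAut.conj y⁻¹).toMonoidHom.comp σ.toMonoidHom
  have hρa : ρ (y ^ 2) = (y ^ 2)⁻¹ := by
    simp only [ρ, MonoidHom.comp_apply, MulEquiv.coe_toMonoidHom, map_pow, hσy,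
      MulAut.conj_apply]
    group
  have hρb : ρ (x * y ^ 2 * x⁻¹) = (x * y ^ 2 * x⁻¹)⁻¹ :=
    calc ρ (x * y ^ 2 * x⁻¹) = y⁻¹ * (x⁻¹ * y ^ 2 * x)⁻¹ * y := by simp [ρ, hσx, hσy, mul_assoc]
      _ = (x * y ^ 2 * x⁻¹)⁻¹ := by
        rw [← conj_conj_sq_by_vertex hxy]
        group
  have hρ : normalClosure {y ^ 2} ≤ (normalClosure {y ^ 2}).comap ρ := by
    refine normalClosure_le_normal (Set.singleton_subset_iff.mpr (mem_comap.mpr ?_))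
    exact hρa ▸ inv_mem (sq_mem_normalClosure_sq y)
  refine ⟨(MulAut.conjNormal x).toMonoidHom, (ρ.comp (normalClosure {y ^ 2}).subtype).codRestrict _
    fun g => hρ g.2, ⟨x⁻¹ * y ^ 2 * x, by simpa using conj_sq_mem_normalClosure_sq x⁻¹ y⟩, ?_⟩
  refine ⟨Subtype.ext ?_, Subtype.ext ?_, Subtype.ext ?_, Subtype.ext ?_, Subtype.ext ?_, hcompl⟩
  · simp [ha, hb]
  · simp [hb, conj_conj_sq_by_face hx]
  · simp [ha, hb, sq_mul_conj_sq_mul_conj_sq hx hxy]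
  · change ρ a = (a : G)⁻¹
    rw [ha, hρa]
  · change ρ b = (b : G)⁻¹
    rw [hb, hρb]

theorem commute_of_mem_normalClosure_sq [Finite G] (hgen : closure {x, y} = ⊤)
    (hx : x ^ 3 = 1) (hxy : (x * y) ^ 2 = 1) (hcomm : Commute (y ^ 2) (x * y ^ 2 * x⁻¹)) {g h : G}
    (hg : g ∈ normalClosure {y ^ 2}) (hh : h ∈ normalClosure {y ^ 2}) : Commute g h := by
  rw [← closure_sq_conj_sq_eq_normalClosure hgen hx hxy] at hg hh
  have : IsMulCommutative (closure {y ^ 2, x * y ^ 2 * x⁻¹}) := isMulCommutative_closure <| by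
    rintro _ (rfl | rfl) _ (rfl | rfl)
    exacts [rfl, hcomm, hcomm.symm, rfl]
  exact setLike_mul_comm hg hh

theorem four_mul_card_normalClosure_sq_le [Finite G] (hx : x ^ 3 = 1)
    (hxy : (x * y) ^ 2 = 1) (hxN : x ∉ normalClosure {y ^ 2})
    (hden : 3 * orderOf y ^ 2 = 2 * Nat.card G) :
    4 * Nat.card (normalClosure {y ^ 2}) ≤ orderOf y ^ 2 := by
  have h6 := six_le_index_of_notMem hx hxy (sq_mem_normalClosure_sq y) hxN
  have hcard := (normalClosure {y ^ 2}).card_mul_index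
  nlinarith

theorem card_vertex_lt_two_mul_orderOf [Finite G] (hden : 3 * orderOf y ^ 2 = 2 * Nat.card G) :
    Nat.card (Vertex y) < 2 * orderOf y := by
  have hcard := (zpowers y).card_eq_card_quotient_mul_card_subgroup
  rw [Nat.card_zpowers] at hcard
  have := orderOf_pos y
  nlinarith

theorem even_orderOf_of_three_mul_sq_eq (hden : 3 * orderOf y ^ 2 = 2 * Nat.card G) :
    Even (orderOf y) := by
  have h : Even (3 * orderOf y ^ 2) := hden ▸ even_two_mul _
  simpa [Nat.even_mul, Nat.even_pow, (by decide : ¬ Even 3)] using h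

end Density

section Period

variable {x y : G}

theorem rot_sq_mem_normalClosure_sq (v : Vertex y) : rot y v ^ 2 ∈ normalClosure {y ^ 2} := by
  obtain ⟨g, rfl⟩ := QuotientGroup.mk_surjective v
  change (g * y * g⁻¹) ^ 2 ∈ _
  rw [conj_pow]
  exact conj_sq_mem_normalClosure_sq g y

theorem rot_smul_self (v : Vertex y) : rot y v • v = v := by
  obtain ⟨g, rfl⟩ := QuotientGroup.mk_surjective v
  exact QuotientGroup.eq.mpr ⟨-1, by simp [rot, mul_assoc]⟩

theorem rot_sq_smul_eq_of_aligned (h : ∀ v w : Vertex y, Commute (rot y v ^ 2) (rot y w ^ 2))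
    {v v' : Vertex y} (hv : Aligned x y v v') : rot y v ^ 2 • v' = v' := by
  induction hv with
  | refl => rw [sq, mul_smul, rot_smul_self, rot_smul_self]
  | tail _ hdiag ih =>
    obtain ⟨w, -, rfl⟩ := hdiag
    rw [← mul_smul, h v w, mul_smul, ih]

theorem evenPeriod_eq_two_of_commute (h : ∀ v w : Vertex y, Commute (rot y v ^ 2) (rot y w ^ 2)) :
    evenPeriod x y = 2 := by
  have hmem : 2 ∈ {j : ℕ | 1 ≤ j ∧ ∀ v v' : Vertex y, Aligned x y v v' → rot y v ^ j • v' = v'} :=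
    ⟨one_le_two, fun _ _ => rot_sq_smul_eq_of_aligned h⟩
  have hle : primPeriod x y ≤ 2 := Nat.sInf_le hmem
  have hpos : 1 ≤ primPeriod x y := (Nat.sInf_mem ⟨2, hmem⟩).1
  refine Nat.lcm_eq_right ?_
  interval_cases primPeriod x y <;> decide

end Period

/-- A simple reflexive regular map with p = 3, not the tetrahedron, of density exactly
2/3, has even period `T = 2`. -/
theorem evenPeriod_eq_two
    (G : Type*) [Group G] [Finite G] (x y : G)
    (hgen : Subgroup.closure {x, y} = ⊤) (hxy : (x * y) ^ 2 = 1)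
    (hrefl : IsReflexive x y) (hsimple : IsSimple x y)
    (hp : orderOf x = 3) (hnt : ¬ IsTet G x y)
    (hden : 3 * orderOf y ^ 2 = 2 * Nat.card G) :
    evenPeriod x y = 2 := by
  have hx : x ^ 3 = 1 := hp ▸ pow_orderOf_eq_one x
  have hy : Even (orderOf y) := even_orderOf_of_three_mul_sq_eq hden
  have hxN : x ∉ normalClosure {y ^ 2} := by
    obtain ⟨s, hs, hs1, hsb⟩ :=
      hrefl.exists_conj_mem_zpowers hsimple hx hxy hy (card_vertex_lt_two_mul_orderOf hden)
    rw [← closure_sq_conj_sq_eq_normalClosure hgen hx hxy]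
    exact hsimple.notMem_closure_of_conj_mem hxy hs hs1 hsb
  obtain ⟨θ, τ, c, htri⟩ := hrefl.exists_isTriality hx hxy (a := ⟨_, sq_mem_normalClosure_sq y⟩)
    (b := ⟨_, conj_sq_mem_normalClosure_sq x y⟩) rfl rfl <|
      hsimple.isComplement'_zpowers hxy hy rfl rfl
        (four_mul_card_normalClosure_sq_le hx hxy hxN hden)
  have hab : Commute (y ^ 2) (x * y ^ 2 * x⁻¹) := congrArg Subtype.val htri.commute.eq
  exact evenPeriod_eq_two_of_commute fun v w => commute_of_mem_normalClosure_sq hgen hx hxy hab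
    (rot_sq_mem_normalClosure_sq v) (rot_sq_mem_normalClosure_sq w)

end RegularMap
end

section
/- Let (G,x,y) encode a reflexive regular map that is simple, is not the tetrahedral map tet, and satisfies 2q² > |G| (density exceeding 1/2). Then [x,y]³ = 1 in G, where [x,y] = x*y*x⁻¹*y⁻¹. -/
namespace RegularMap

variable {G : Type*} [Group G]

/-!
Write `H = ⟨y⟩` and `e = x * y`, an involution. Simplicity gives `H ∩ eHe⁻¹ = 1`, so the double
coset `HeH` has `q²` elements, more than half of `G`. Hence for each `g` either `g ∈ HeH`, or
`H ∩ gHg⁻¹ ≠ 1`, and then `g` and `y` lie in a subgroup missing `e`, the normalizer of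
`H ∩ gHg⁻¹`.

Take `g = e * y ^ n * e⁻¹`. In the first case the reflection forces `(e * y ^ n) ^ 3 = 1`. In the
second case, for `n = 1` the subgroup contains more than half of `G`, a contradiction, and for a
prime `n = p` its index lies strictly between `p` and `2 * p`. The second case cannot occur for both
`n = 2` and `n = 3`: the subgroups would have index 3 and index 4 or 5, and their intersection too
large an index. Given `(e * y) ^ 3 = 1`, the relation for `n = 2` forces `x ^ 3 = y ^ 3 = 1`, the
tetrahedral map, and the relation for `n = 3`, equivalently for `n = -3`, is conjugate to
`[x, y] ^ 3 = 1`.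
-/

section

open scoped Pointwise
open Subgroup DoubleCoset

lemma mem_iff_pow_natCard_eq_one [Finite G] [IsCyclic G] (S : Subgroup G) {g : G} :
    g ∈ S ↔ g ^ Nat.card S = 1 := by
  classical
  have := Fintype.ofFinite G
  have hsub : (S : Set G) ⊆ {g | g ^ Nat.card S = 1} := fun g hg ↦
    orderOf_dvd_iff_pow_eq_one.mp (S.orderOf_dvd_natCard hg)
  have hcard : {g : G | g ^ Nat.card S = 1}.ncard ≤ (S : Set G).ncard := by
    rw [Set.ncard_eq_toFinset_card', Set.toFinset_ofPred]
    exact IsCyclic.card_pow_eq_one_le Nat.card_pos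
  exact Set.ext_iff.mp (Set.eq_of_subset_of_ncard_le hsub hcard) g

lemma eq_of_card_eq_of_le_isCyclic {H A B : Subgroup G} [Finite H] [IsCyclic H] (hA : A ≤ H)
    (hB : B ≤ H) (hcard : Nat.card A = Nat.card B) : A = B := by
  rw [← inf_of_le_left hA, ← inf_of_le_left hB, ← subgroupOf_inj]
  ext h
  rw [mem_iff_pow_natCard_eq_one, mem_iff_pow_natCard_eq_one (B.subgroupOf H),
    Nat.card_congr (subgroupOfEquivOfLe hA).toEquiv,
    Nat.card_congr (subgroupOfEquivOfLe hB).toEquiv, hcard]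

lemma mem_normalizer_iff_conj_smul_eq {H : Subgroup G} {g : G} :
    g ∈ normalizer (H : Set G) ↔ MulAut.conj g • H = H :=
  mem_normalizer_iff_map_conj_eq

lemma exists_le_mem_notMem_of_not_disjoint_conj {H : Subgroup G} [Finite H] [IsCyclic H] {e g : G}
    (he : Disjoint H (MulAut.conj e • H)) (hg : ¬ Disjoint H (MulAut.conj g • H)) :
    ∃ K : Subgroup G, H ≤ K ∧ g ∈ K ∧ e ∉ K := by
  set D := H ⊓ MulAut.conj g • H with hD
  have hnorm {a : G} (ha : MulAut.conj a • D ≤ H) : a ∈ normalizer (D : Set G) :=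
    mem_normalizer_iff_conj_smul_eq.mpr <|
      eq_of_card_eq_of_le_isCyclic ha inf_le_left (Nat.card_congr (equivSMul _ D).toEquiv).symm
  -- Conjugation by `g⁻¹` or by an element of `H` carries `D` to a subgroup of the cyclic group `H`
  -- of the same order, hence to `D` itself; a nontrivial `D` is not normalized by `e`.
  refine ⟨normalizer (D : Set G), fun h hh ↦ hnorm ?_, ?_, fun hmem ↦ ?_⟩
  · exact conj_smul_le_of_le inf_le_left ⟨h, hh⟩
  · rw [← inv_mem_iff]
    exact hnorm (by simp [hD, smul_inf, smul_smul])
  · refine hg (disjoint_iff_inf_le.mpr (he inf_le_left ?_))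
    calc D = MulAut.conj e • D := (mem_normalizer_iff_conj_smul_eq.mp hmem).symm
      _ ≤ MulAut.conj e • H := map_mono inf_le_left

lemma ncard_doubleCoset_of_disjoint {H K : Subgroup G} {g : G}
    (hd : Disjoint H (MulAut.conj g • K)) :
    (doubleCoset g (H : Set G) K).ncard = Nat.card H * Nat.card K := by
  have hmul : doubleCoset g (H : Set G) K =
      Set.range fun p : H × (MulAut.conj g • K : Subgroup G) ↦ (p.1 * p.2 * g : G) := by
    ext a
    constructor
    · intro ha
      obtain ⟨h, hh, k, hk, rfl⟩ := mem_doubleCoset.mp ha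
      exact ⟨⟨⟨h, hh⟩, ⟨_, smul_mem_pointwise_smul k (MulAut.conj g) K hk⟩⟩, by simp [mul_assoc]⟩
    · rintro ⟨⟨⟨h, hh⟩, ⟨_, k, hk, rfl⟩⟩, rfl⟩
      exact mem_doubleCoset.mpr ⟨h, hh, k, hk, by simp [mul_assoc]⟩
  have hinj : Function.Injective
      fun p : H × (MulAut.conj g • K : Subgroup G) ↦ (p.1 * p.2 * g : G) :=
    (mul_left_injective g).comp (mul_injective_of_disjoint hd)
  rw [hmul, ← Nat.card_coe_set_eq, Nat.card_range_of_injective hinj, Nat.card_prod,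
    Nat.card_congr (equivSMul (MulAut.conj g) K).toEquiv]

lemma mem_doubleCoset_of_card_lt [Finite G] {H K : Subgroup G} {e g : G}
    (he : Disjoint H (MulAut.conj e • K)) (hg : Disjoint H (MulAut.conj g • K))
    (hcard : Nat.card G < 2 * (Nat.card H * Nat.card K)) : g ∈ doubleCoset e (H : Set G) K := by
  refine mem_doubleCoset_of_not_disjoint fun hd ↦ hcard.not_ge ?_
  calc 2 * (Nat.card H * Nat.card K)
      = (doubleCoset e (H : Set G) K ∪ doubleCoset g (H : Set G) K).ncard := by
        rw [Set.ncard_union_eq hd, ncard_doubleCoset_of_disjoint he,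
          ncard_doubleCoset_of_disjoint hg, two_mul]
    _ ≤ Nat.card G := Set.ncard_le_card _

lemma inv_eq_self_of_sq_eq_one {a : G} (ha : a ^ 2 = 1) : a⁻¹ = a :=
  inv_eq_of_mul_eq_one_left (by rw [← sq, ha])

lemma mul_pow_three_eq_one_iff {e u : G} (he : e⁻¹ = e) :
    (e * u) ^ 3 = 1 ↔ e * u * e⁻¹ = u⁻¹ * e * u⁻¹ := by
  have hcube : (e * u) ^ 3 = e * u * e⁻¹ * (u⁻¹ * e * u⁻¹)⁻¹ := by
    simp only [pow_succ, pow_zero, one_mul, mul_inv_rev, inv_inv, he, mul_assoc]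
  rw [hcube, mul_inv_eq_one]

lemma mul_inv_pow_three_eq_one {e u : G} (he : e⁻¹ = e) (hu : (e * u) ^ 3 = 1) :
    (e * u⁻¹) ^ 3 = 1 := by
  rw [mul_pow_three_eq_one_iff he] at hu ⊢
  simpa [he, mul_assoc] using congrArg (·⁻¹) hu

lemma eq_of_conj_eq_mul_mul {H : Subgroup G} {e u b c : G} {τ : G →* G} (he : e⁻¹ = e)
    (hd : Disjoint H (MulAut.conj e • H)) (hτe : τ e = e) (hτ : ∀ h ∈ H, τ h = h⁻¹)
    (hu : u ∈ H) (hb : b ∈ H) (hc : c ∈ H) (h : e * u * e⁻¹ = b * e * c) : b = c := by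
  -- `g ↦ (τ g)⁻¹` reverses products and fixes `e` and every element of `H`.
  have hrev : e * u * e⁻¹ = c * e * b := by
    simpa [hτe, hτ _ hu, hτ _ hb, hτ _ hc, he, mul_assoc] using congrArg (fun g ↦ (τ g)⁻¹) h
  have hconj : c⁻¹ * b = MulAut.conj e (b * c⁻¹) := by
    calc c⁻¹ * b = c⁻¹ * (b * e * c) * c⁻¹ * e⁻¹ := by group
      _ = c⁻¹ * (c * e * b) * c⁻¹ * e⁻¹ := by rw [← h, hrev]
      _ = MulAut.conj e (b * c⁻¹) := by rw [MulAut.conj_apply]; group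
  have hone : c⁻¹ * b = 1 := disjoint_def.mp hd (mul_mem (inv_mem hc) hb)
    (hconj ▸ smul_mem_pointwise_smul _ _ H (mul_mem hb (inv_mem hc)))
  exact (inv_mul_eq_one.mp hone).symm

lemma mul_pow_three_eq_one_of_mem_doubleCoset {H : Subgroup G} {e u : G} {τ : G →* G}
    (he : e⁻¹ = e) (hd : Disjoint H (MulAut.conj e • H)) (hτe : τ e = e)
    (hτ : ∀ h ∈ H, τ h = h⁻¹) (hu : u ∈ H) (hmem : e * u * e⁻¹ ∈ doubleCoset e (H : Set G) H) :
    (e * u) ^ 3 = 1 := by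
  obtain ⟨b, hb, c, hc, h⟩ := mem_doubleCoset.mp hmem
  obtain rfl : b = c := eq_of_conj_eq_mul_mul he hd hτe hτ hu hb hc h
  have hb' : e * b * e⁻¹ = b⁻¹ * e * u := by
    calc e * b * e⁻¹ = b⁻¹ * (b * e * b) * e := by rw [he]; group
      _ = b⁻¹ * e * u := by rw [← h]; group
  obtain rfl : b⁻¹ = u := eq_of_conj_eq_mul_mul he hd hτe hτ hb (inv_mem hb) hu hb'
  rw [mul_pow_three_eq_one_iff he, h, inv_inv]

lemma card_mul_card_le_of_disjoint {A B L : Subgroup G} [Finite L] (hA : A ≤ L) (hB : B ≤ L)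
    (hd : Disjoint A B) : Nat.card A * Nat.card B ≤ Nat.card L := by
  rw [← Nat.card_prod]
  exact Nat.card_le_card_of_injective
    (fun p : A × B ↦ (⟨p.1 * p.2, mul_mem (hA p.1.2) (hB p.2.2)⟩ : L))
    fun _ _ h ↦ mul_injective_of_disjoint hd (congrArg Subtype.val h)

lemma index_lt_two_mul [Finite G] {L : Subgroup G} {e y : G} {k : ℕ}
    (hd : Disjoint (zpowers y) (MulAut.conj e • zpowers y))
    (hcard : Nat.card G < 2 * orderOf y ^ 2) (hk : 0 < k) (hy : y ∈ L)
    (hconj : e * y ^ k * e⁻¹ ∈ L) : L.index < 2 * k := by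
  have hle : zpowers (e * y ^ k * e⁻¹) ≤ MulAut.conj e • zpowers y := zpowers_le.mpr <|
    smul_mem_pointwise_smul (y ^ k) (MulAut.conj e) _ (npow_mem_zpowers y k)
  have hL : orderOf (y ^ k) * orderOf y ≤ Nat.card L := by
    rw [← (MulAut.conj e).orderOf_eq, ← Nat.card_zpowers, ← Nat.card_zpowers]
    exact card_mul_card_le_of_disjoint (zpowers_le.mpr hconj) (zpowers_le.mpr hy)
      (hd.symm.mono_left hle)
  have hord : orderOf y ≤ k * orderOf (y ^ k) :=
    Nat.le_of_dvd (Nat.mul_pos hk (orderOf_pos _))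
      (orderOf_dvd_of_pow_eq_one (by rw [pow_mul, pow_orderOf_eq_one]))
  by_contra! hindex
  refine hcard.not_ge ?_
  calc 2 * orderOf y ^ 2 ≤ 2 * (k * orderOf (y ^ k) * orderOf y) := by rw [sq]; gcongr
    _ = orderOf (y ^ k) * orderOf y * (2 * k) := by ring
    _ ≤ Nat.card L * L.index := by gcongr
    _ = Nat.card G := L.card_mul_index

lemma eq_top_of_conj_mem [Finite G] {L : Subgroup G} {e y : G}
    (hd : Disjoint (zpowers y) (MulAut.conj e • zpowers y))
    (hcard : Nat.card G < 2 * orderOf y ^ 2) (hy : y ∈ L) (hconj : e * y * e⁻¹ ∈ L) : L = ⊤ := by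
  have hlt : L.index < 2 * 1 := index_lt_two_mul hd hcard one_pos hy (by rwa [pow_one])
  have hne : L.index ≠ 0 := index_ne_zero_of_finite
  exact index_eq_one.mp (by lia)

lemma prime_lt_index {K : Subgroup G} [K.FiniteIndex] {e y : G} {p : ℕ} [Fact p.Prime] (hy : y ∈ K)
    (he : e ∉ K) (hconj : e * y * e⁻¹ ∉ K) (hconj_pow : e * y ^ p * e⁻¹ ∈ K) : p < K.index := by
  -- The cyclic group generated by `y` moves the coset `e⁻¹K` around an orbit of size `p`, which
  -- misses the coset `K`, fixed by `y`.
  let v : G ⧸ K := (e⁻¹ : G)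
  have hfix (n : ℕ) : y ^ n • v = v ↔ e * y ^ n * e⁻¹ ∈ K := by
    rw [eq_comm, MulAction.Quotient.smul_coe, QuotientGroup.eq, inv_inv, smul_eq_mul, mul_assoc]
  have hperiod : Function.minimalPeriod (y • ·) v = p := by
    refine Function.minimalPeriod_eq_prime ?_ ?_
    · rw [Function.IsPeriodicPt, smul_iterate]
      exact (hfix p).mpr hconj_pow
    · simpa [Function.IsFixedPt] using (hfix 1).not.mpr (by simpa using hconj)
  have horbit : (MulAction.orbit (zpowers y) v).ncard = p := by
    rw [← Nat.card_coe_set_eq]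
    exact (Nat.card_congr (MulAction.orbitZPowersEquiv y v)).trans
      ((Nat.card_zmod _).trans hperiod)
  have hmem : ((1 : G) : G ⧸ K) ∉ MulAction.orbit (zpowers y) v := by
    rintro ⟨⟨_, n, rfl⟩, hn⟩
    have hz : (y ^ n * e⁻¹)⁻¹ * 1 ∈ K := QuotientGroup.eq.mp hn
    rw [mul_inv_rev, inv_inv, mul_one] at hz
    exact he ((mul_mem_cancel_right (inv_mem (zpow_mem hy n))).mp hz)
  rw [← horbit, index]
  exact Set.ncard_lt_card fun h ↦ hmem (h ▸ Set.mem_univ _)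

lemma mul_pow_three_eq_one_or [Finite G] {e y : G} {τ : G →* G}
    (he : e⁻¹ = e) (hd : Disjoint (zpowers y) (MulAut.conj e • zpowers y))
    (hτe : τ e = e) (hτ : ∀ h ∈ zpowers y, τ h = h⁻¹) (hcard : Nat.card G < 2 * orderOf y ^ 2)
    {u : G} (hu : u ∈ zpowers y) :
    (e * u) ^ 3 = 1 ∨ ∃ K : Subgroup G, y ∈ K ∧ e * u * e⁻¹ ∈ K ∧ e ∉ K := by
  by_cases hg : Disjoint (zpowers y) (MulAut.conj (e * u * e⁻¹) • zpowers y)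
  · refine .inl (mul_pow_three_eq_one_of_mem_doubleCoset he hd hτe hτ hu ?_)
    exact mem_doubleCoset_of_card_lt hd hg (by rwa [Nat.card_zpowers, ← sq])
  · obtain ⟨K, hle, hgK, heK⟩ := exists_le_mem_notMem_of_not_disjoint_conj hd hg
    exact .inr ⟨K, hle (mem_zpowers y), hgK, heK⟩

lemma mul_self_pow_three_eq_one [Finite G] {e y : G} {τ : G →* G}
    (he : e⁻¹ = e) (hd : Disjoint (zpowers y) (MulAut.conj e • zpowers y))
    (hτe : τ e = e) (hτ : ∀ h ∈ zpowers y, τ h = h⁻¹) (hcard : Nat.card G < 2 * orderOf y ^ 2) :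
    (e * y) ^ 3 = 1 := by
  refine (mul_pow_three_eq_one_or he hd hτe hτ hcard (mem_zpowers y)).resolve_right ?_
  rintro ⟨K, hy, hconj, heK⟩
  exact heK (eq_top_of_conj_mem hd hcard hy hconj ▸ mem_top e)

lemma mul_pow_prime_pow_three_eq_one_or [Finite G] {e y : G} {τ : G →* G} {p : ℕ}
    [hp : Fact p.Prime]
    (he : e⁻¹ = e) (hd : Disjoint (zpowers y) (MulAut.conj e • zpowers y))
    (hτe : τ e = e) (hτ : ∀ h ∈ zpowers y, τ h = h⁻¹) (hcard : Nat.card G < 2 * orderOf y ^ 2) :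
    (e * y ^ p) ^ 3 = 1 ∨
      ∃ K : Subgroup G, y ∈ K ∧ e * y ^ p * e⁻¹ ∈ K ∧ p < K.index ∧ K.index < 2 * p := by
  refine (mul_pow_three_eq_one_or he hd hτe hτ hcard (npow_mem_zpowers y p)).imp_right ?_
  rintro ⟨K, hy, hconj, heK⟩
  refine ⟨K, hy, hconj, prime_lt_index hy heK (fun h ↦ heK ?_) hconj,
    index_lt_two_mul hd hcard hp.out.pos hy hconj⟩
  exact eq_top_of_conj_mem hd hcard hy h ▸ mem_top e

lemma mul_sq_pow_three_eq_one_or_mul_cube_pow_three_eq_one [Finite G] {e y : G} {τ : G →* G}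
    (he : e⁻¹ = e) (hd : Disjoint (zpowers y) (MulAut.conj e • zpowers y))
    (hτe : τ e = e) (hτ : ∀ h ∈ zpowers y, τ h = h⁻¹) (hcard : Nat.card G < 2 * orderOf y ^ 2) :
    (e * y ^ 2) ^ 3 = 1 ∨ (e * y ^ 3) ^ 3 = 1 := by
  by_contra! hne
  obtain ⟨K, hy, hconj, hlt, hgt⟩ :=
    (mul_pow_prime_pow_three_eq_one_or he hd hτe hτ hcard).resolve_left hne.1
  obtain ⟨L, hy', hconj', hlt', hgt'⟩ :=
    (mul_pow_prime_pow_three_eq_one_or he hd hτe hτ hcard).resolve_left hne.2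
  -- `K ⊓ L` contains `y` and `e * y ^ 6 * e⁻¹`, so its index is below 12; but it is a multiple of
  -- 12 or of 15.
  have hK : K.index = 3 := by lia
  have hL : L.index = 4 ∨ L.index = 5 := by lia
  have hconj_inf : e * y ^ 6 * e⁻¹ ∈ K ⊓ L := by
    constructor
    · rw [show e * y ^ 6 * e⁻¹ = (e * y ^ 2 * e⁻¹) ^ 3 by rw [conj_pow, ← pow_mul]]
      exact pow_mem hconj 3
    · rw [show e * y ^ 6 * e⁻¹ = (e * y ^ 3 * e⁻¹) ^ 2 by rw [conj_pow, ← pow_mul]]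
      exact pow_mem hconj' 2
  have hinf : (K ⊓ L).index < 2 * 6 :=
    index_lt_two_mul hd hcard (by norm_num) ⟨hy, hy'⟩ hconj_inf
  have hdvd : K.index ∣ (K ⊓ L).index := index_dvd_of_le inf_le_left
  have hdvd' : L.index ∣ (K ⊓ L).index := index_dvd_of_le inf_le_right
  have hne : (K ⊓ L).index ≠ 0 := index_ne_zero_of_finite
  rcases hL with hL | hL <;> rw [hK] at hdvd <;> rw [hL] at hdvd' <;> lia

lemma pow_three_eq_one_of_disjoint {e y : G} (he : e⁻¹ = e)
    (hd : Disjoint (zpowers y) (MulAut.conj e • zpowers y))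
    (h₁ : (e * y) ^ 3 = 1) (h₂ : (e * y ^ 2) ^ 3 = 1) : y ^ 3 = 1 := by
  have hconj₁ : e * y * e⁻¹ = y⁻¹ * e * y⁻¹ := (mul_pow_three_eq_one_iff he).mp h₁
  have hconj₂ : e * y ^ 2 * e⁻¹ = (y ^ 2)⁻¹ * e * (y ^ 2)⁻¹ := (mul_pow_three_eq_one_iff he).mp h₂
  have hconj₂_inv : e * (y ^ 2)⁻¹ * e⁻¹ = y ^ 2 * e * y ^ 2 := by
    simpa only [inv_inv] using
      (mul_pow_three_eq_one_iff he).mp (mul_inv_pow_three_eq_one he h₂)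
  have hsq : e * y ^ 2 * e⁻¹ = y * e * y := by
    calc e * y ^ 2 * e⁻¹ = (e * y * e⁻¹) ^ 2 := conj_pow.symm
      _ = y⁻¹ * (e * (y ^ 2)⁻¹ * e) * y⁻¹ := by rw [hconj₁, sq]; group
      _ = y⁻¹ * (y ^ 2 * e * y ^ 2) * y⁻¹ := by rw [← hconj₂_inv, he]
      _ = y * e * y := by group
  have hfix : y ^ 3 * e * y ^ 3 = e := by
    calc y ^ 3 * e * y ^ 3 = y ^ 2 * (y * e * y) * y ^ 2 := by group
      _ = e := by rw [← hsq, hconj₂]; group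
  have hcube : y ^ 3 = MulAut.conj e (y ^ 3)⁻¹ := by
    rw [MulAut.conj_apply, eq_mul_inv_iff_mul_eq, eq_mul_inv_iff_mul_eq, hfix]
  exact disjoint_def.mp hd (npow_mem_zpowers y 3) <| hcube ▸
    smul_mem_pointwise_smul _ (MulAut.conj e) _ (inv_mem (npow_mem_zpowers y 3))

lemma conj_mem_zpowers_or_mem_doubleCoset {e y h : G} (he : e⁻¹ = e) (hey : (e * y) ^ 3 = 1)
    (hy : y ^ 3 = 1) (hh : h ∈ zpowers y) :
    e * h * e⁻¹ ∈ zpowers y ∨ e * h * e⁻¹ ∈ doubleCoset e (zpowers y : Set G) (zpowers y) := by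
  obtain ⟨n, rfl⟩ := hh
  obtain ⟨i, j, rfl, hj⟩ : ∃ i j : ℤ, n = 3 * i + j ∧ (j = 0 ∨ j = 1 ∨ j = -1) :=
    ⟨(n + 1) / 3, n - 3 * ((n + 1) / 3), by lia, by lia⟩
  have hpow : y ^ (3 * i + j) = y ^ j := by
    rw [zpow_add, zpow_mul, zpow_ofNat, hy, one_zpow, one_mul]
  have hinv : y⁻¹ ∈ zpowers y := inv_mem (mem_zpowers y)
  simp only [hpow]
  rcases hj with rfl | rfl | rfl
  · exact .inl (by simp)
  · refine .inr (mem_doubleCoset.mpr ⟨y⁻¹, hinv, y⁻¹, hinv, ?_⟩)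
    rw [zpow_one, (mul_pow_three_eq_one_iff he).mp hey]
  · refine .inr (mem_doubleCoset.mpr ⟨y, mem_zpowers y, y, mem_zpowers y, ?_⟩)
    rw [zpow_neg_one, (mul_pow_three_eq_one_iff he).mp (mul_inv_pow_three_eq_one he hey), inv_inv]

lemma mem_or_mem_doubleCoset_of_conj_mem {H : Subgroup G} {e : G} (he : e⁻¹ = e)
    (hgen : closure (insert e (H : Set G)) = ⊤)
    (hconj : ∀ h ∈ H, e * h * e⁻¹ ∈ H ∨ e * h * e⁻¹ ∈ doubleCoset e (H : Set G) H) (g : G) :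
    g ∈ H ∨ g ∈ doubleCoset e (H : Set G) H := by
  have hmul_mem {a h : G} (hh : h ∈ H) (ha : a ∈ H ∨ a ∈ doubleCoset e (H : Set G) H) :
      a * h ∈ H ∨ a * h ∈ doubleCoset e (H : Set G) H := by
    refine ha.imp (mul_mem · hh) fun ha ↦ ?_
    obtain ⟨b, hb, c, hc, rfl⟩ := mem_doubleCoset.mp ha
    exact mem_doubleCoset.mpr ⟨b, hb, c * h, mul_mem hc hh, by group⟩
  have hmul {a : G} (ha : a ∈ H ∨ a ∈ doubleCoset e (H : Set G) H) :
      a * e ∈ H ∨ a * e ∈ doubleCoset e (H : Set G) H := by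
    rcases ha with ha | ha
    · exact .inr (mem_doubleCoset.mpr ⟨a, ha, 1, one_mem H, by group⟩)
    · obtain ⟨b, hb, c, hc, rfl⟩ := mem_doubleCoset.mp ha
      rw [show b * e * c * e = b * (e * c * e⁻¹) by rw [he]; group]
      refine (hconj c hc).imp (mul_mem hb) fun hc ↦ ?_
      obtain ⟨b', hb', c', hc', hbc⟩ := mem_doubleCoset.mp hc
      exact mem_doubleCoset.mpr ⟨b * b', mul_mem hb hb', c', hc', by rw [hbc]; group⟩
  induction hgen ▸ mem_top g using closure_induction_right with
  | one => exact .inl (one_mem H)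
  | mul_right a _ b hb ih =>
    rcases hb with rfl | hb
    exacts [hmul ih, hmul_mem hb ih]
  | mul_inv_cancel a _ b hb ih =>
    rcases hb with rfl | hb
    exacts [he.symm ▸ hmul ih, hmul_mem (inv_mem hb) ih]

lemma closure_insert_mul_zpowers {x y : G} (hgen : closure {x, y} = ⊤) :
    closure (insert (x * y) (zpowers y : Set G)) = ⊤ := by
  have hy : y ∈ closure (insert (x * y) (zpowers y : Set G)) :=
    subset_closure (.inr (mem_zpowers y))
  rw [eq_top_iff, ← hgen, closure_le, Set.pair_subset_iff]
  exact ⟨(mul_mem_cancel_right hy).mp (subset_closure (.inl rfl)), hy⟩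

lemma mem_zpowers_or_mem_doubleCoset {x y : G} (hgen : closure {x, y} = ⊤) (hx : x ^ 3 = 1)
    (hy : y ^ 3 = 1) (hxy : (x * y) ^ 2 = 1) (g : G) :
    g ∈ zpowers y ∨ g ∈ doubleCoset (x * y) (zpowers y : Set G) (zpowers y) := by
  have he : (x * y)⁻¹ = x * y := inv_eq_self_of_sq_eq_one hxy
  have hey : (x * y * y) ^ 3 = 1 := by
    simpa using mul_inv_pow_three_eq_one (u := y⁻¹) he (by simpa using hx)
  exact mem_or_mem_doubleCoset_of_conj_mem he (closure_insert_mul_zpowers hgen)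
    (fun _ ↦ conj_mem_zpowers_or_mem_doubleCoset he hey hy) g

lemma injective_of_doubleCoset {G' : Type*} [Group G'] (φ : G →* G') {e y : G}
    (hnf : ∀ g, g ∈ zpowers y ∨ g ∈ doubleCoset e (zpowers y : Set G) (zpowers y))
    (he : φ e ∉ zpowers (φ y)) (hy : orderOf y ∣ orderOf (φ y)) : Function.Injective φ := by
  rw [injective_iff_map_eq_one]
  intro g hg
  rcases hnf g with ⟨i, rfl⟩ | hmem
  · simp only [map_zpow] at hg
    exact orderOf_dvd_iff_zpow_eq_one.mp
      ((Int.natCast_dvd_natCast.mpr hy).trans (orderOf_dvd_iff_zpow_eq_one.mpr hg))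
  · obtain ⟨b, hb, c, hc, rfl⟩ := mem_doubleCoset.mp hmem
    have hφ {h : G} (hh : h ∈ zpowers y) : φ h ∈ zpowers (φ y) :=
      φ.map_zpowers y ▸ mem_map_of_mem φ hh
    refine (he ?_).elim
    rw [← mul_mem_cancel_left (hφ hb), ← mul_mem_cancel_right (hφ hc), ← map_mul, ← map_mul, hg]
    exact one_mem _

lemma closure_of_zero_of_one_eq_top (rels : Set (FreeGroup (Fin 2))) :
    closure {(PresentedGroup.of 0 : PresentedGroup rels), PresentedGroup.of 1} = ⊤ := by
  rw [← PresentedGroup.closure_range_of]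
  congr 1
  ext g
  simp only [Set.mem_insert_iff, Set.mem_singleton_iff, Set.mem_range, Fin.exists_fin_two, eq_comm]

lemma isTet_of_pow_three {x y : G} (hgen : closure {x, y} = ⊤) (hx : x ^ 3 = 1) (hy : y ^ 3 = 1)
    (hxy : (x * y) ^ 2 = 1) (hmem : x * y ∉ zpowers y) : IsTet G x y := by
  have hrels : ∀ r ∈ tetRels, FreeGroup.lift ![x, y] r = 1 := by
    rintro r (rfl | rfl | rfl) <;> simp [hx, hy, hxy]
  let φ := PresentedGroup.toGroup hrels
  have hφx : φ (.of 0) = x := by simp [φ]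
  have hφy : φ (.of 1) = y := by simp [φ]
  have hX : (PresentedGroup.of 0 : PresentedGroup tetRels) ^ 3 = 1 :=
    PresentedGroup.one_of_mem (.inl rfl)
  have hY : (PresentedGroup.of 1 : PresentedGroup tetRels) ^ 3 = 1 :=
    PresentedGroup.one_of_mem (.inr (.inl rfl))
  have hXY : (PresentedGroup.of 0 * PresentedGroup.of 1 : PresentedGroup tetRels) ^ 2 = 1 :=
    PresentedGroup.one_of_mem (.inr (.inr rfl))
  have hy_ne : y ≠ 1 := by
    rintro rfl
    rw [mul_one] at hxy hmem
    exact hmem (by simpa [pow_succ, hxy] using hx)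
  have hinj : Function.Injective φ := by
    refine injective_of_doubleCoset φ
      (mem_zpowers_or_mem_doubleCoset (closure_of_zero_of_one_eq_top _) hX hY hXY) ?_ ?_
    · rwa [map_mul, hφx, hφy]
    · rw [hφy, orderOf_eq_prime hy hy_ne]
      exact orderOf_dvd_of_pow_eq_one hY
  have hsurj : Function.Surjective φ := by
    rw [← MonoidHom.range_eq_top, eq_top_iff, ← hgen, closure_le, Set.pair_subset_iff]
    exact ⟨⟨_, hφx⟩, ⟨_, hφy⟩⟩
  exact ⟨.ofBijective φ ⟨hinj, hsurj⟩, hφx, hφy⟩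

lemma IsSimple.mul_notMem_zpowers {x y : G} (h : IsSimple x y) : x * y ∉ zpowers y := by
  simpa only [ne_eq, QuotientGroup.eq, inv_one, one_mul] using h.1 1

lemma IsSimple.disjoint {x y : G} (h : IsSimple x y) (hxy : (x * y) ^ 2 = 1) :
    Disjoint (zpowers y) (MulAut.conj (x * y) • zpowers y) := by
  have he : (x * y)⁻¹ = x * y := inv_eq_self_of_sq_eq_one hxy
  rw [disjoint_def]
  intro z hz hz'
  rw [mem_pointwise_smul_iff_inv_smul_mem, ← map_inv, he, MulAut.smul_def, MulAut.conj_apply]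
    at hz'
  have hstart : ((1 : G) : Vertex y) = (z : Vertex y) := QuotientGroup.eq.mpr (by simpa using hz)
  have hend : ((1 * x * y : G) : Vertex y) = ((z * x * y : G) : Vertex y) := by
    rw [QuotientGroup.eq, one_mul, mul_assoc z]
    simpa only [he, mul_assoc] using hz'
  have hedge := h.2 1 z (by rw [← hend, ← hstart])
  rw [QuotientGroup.eq, inv_one, one_mul] at hedge
  obtain ⟨n, rfl⟩ := hedge
  rcases Int.even_or_odd' n with ⟨k, rfl | rfl⟩
  · simp [zpow_mul, hxy]
  · exact (h.mul_notMem_zpowers (by simpa [zpow_add, zpow_mul, hxy] using hz)).elim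

lemma IsReflexive.exists_reflection {x y : G} (h : IsReflexive x y) (hxy : (x * y) ^ 2 = 1) :
    ∃ τ : G →* G, τ (x * y) = x * y ∧ ∀ z ∈ zpowers y, τ z = z⁻¹ := by
  obtain ⟨σ, hσx, hσy⟩ := h
  refine ⟨(MulAut.conj y⁻¹).toMonoidHom.comp σ.toMonoidHom, ?_, ?_⟩
  · have he : (x * y)⁻¹ = x * y := inv_eq_self_of_sq_eq_one hxy
    calc y⁻¹ * σ (x * y) * y⁻¹⁻¹ = (x * y)⁻¹ := by rw [map_mul, hσx, hσy]; group
      _ = x * y := he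
  · rintro _ ⟨n, rfl⟩
    calc y⁻¹ * σ (y ^ n) * y⁻¹⁻¹ = (y ^ n)⁻¹ := by rw [map_zpow, hσy]; group

lemma commutator_pow_three_eq_one {x y : G} (hxy : (x * y) ^ 2 = 1)
    (h₁ : (x * y * y) ^ 3 = 1) (h₃ : (x * y * y ^ 3) ^ 3 = 1) :
    (x * y * x⁻¹ * y⁻¹) ^ 3 = 1 := by
  have he : (x * y)⁻¹ = x * y := inv_eq_self_of_sq_eq_one hxy
  have hcomm : x * y * x⁻¹ * y⁻¹ = y⁻¹ * (x * y * (y ^ 3)⁻¹) * y⁻¹⁻¹ := by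
    calc x * y * x⁻¹ * y⁻¹ = x * y * y * (x * y)⁻¹ * y⁻¹ := by group
      _ = y⁻¹ * (x * y) * y⁻¹ * y⁻¹ := by rw [(mul_pow_three_eq_one_iff he).mp h₁]
      _ = y⁻¹ * (x * y * (y ^ 3)⁻¹) * y⁻¹⁻¹ := by group
  rw [hcomm, conj_pow, mul_inv_pow_three_eq_one he h₃, mul_one, mul_inv_cancel]

end

/-- A simple reflexive regular map, not the tetrahedron, of density exceeding 1/2
satisfies the relation `[x,y]³ = 1`. -/
theorem commutator_cubed_eq_one
    (G : Type*) [Group G] [Finite G] (x y : G)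
    (hgen : Subgroup.closure {x, y} = ⊤) (hxy : (x * y) ^ 2 = 1)
    (hrefl : IsReflexive x y) (hsimple : IsSimple x y)
    (hnt : ¬ IsTet G x y)
    (hden : 2 * orderOf y ^ 2 > Nat.card G) :
    (x * y * x⁻¹ * y⁻¹) ^ 3 = 1 := by
  have he : (x * y)⁻¹ = x * y := inv_eq_self_of_sq_eq_one hxy
  have hd := hsimple.disjoint hxy
  obtain ⟨τ, hτe, hτ⟩ := hrefl.exists_reflection hxy
  have h₁ : (x * y * y) ^ 3 = 1 := mul_self_pow_three_eq_one he hd hτe hτ hden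
  rcases mul_sq_pow_three_eq_one_or_mul_cube_pow_three_eq_one he hd hτe hτ hden with h₂ | h₃
  · have hx : x ^ 3 = 1 := by simpa using mul_inv_pow_three_eq_one he h₁
    have hy : y ^ 3 = 1 := pow_three_eq_one_of_disjoint he hd h₁ h₂
    exact absurd (isTet_of_pow_three hgen hx hy hxy hsimple.mul_notMem_zpowers) hnt
  · exact commutator_pow_three_eq_one hxy h₁ h₃

end RegularMap
end

section
/- For every integer n ≥ 1, the Fermat group G_n is finite of order 6n²; moreover the image of the generator X in G_n has order 3 and the image of the generator Y in G_n has order 2n. -/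
namespace RegularMap

variable {G : Type*} [Group G]

/-! In any group in which `x`, `y` satisfy the Fermat relations, put `a = y ^ 2` and
`b = x * a * x⁻¹`. The relation `(x * y) ^ 2 = 1` makes `a * x` conjugate to `x⁻¹` and `[x, y]`
conjugate to `a⁻¹ * x`, so that `(a * x) ^ 3 = (a⁻¹ * x) ^ 3 = 1`, and these two equations force `a`
and `b` to commute and `x * b * x⁻¹ = (a * b)⁻¹`. Hence `a` and `b` generate a normal abelian
subgroup, a quotient of `(ℤ/n)²`. The rotation `a⁻¹ * x` and the reflection `x * y` satisfy the
relations of the dihedral group of order 6 and permute `a`, `b`, `(a * b)⁻¹` by conjugation, which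
yields an isomorphism `G_n ≅ (ℤ/n)² ⋊ D₃`. -/

section Homomorphisms

variable {m k : ℕ}

/-- The homomorphism out of the cyclic group `ℤ/m`, written multiplicatively, that sends its
generator to `g`. -/
def zmodPowHom (g : G) (hg : g ^ m = 1) : Multiplicative (ZMod m) →* G :=
  AddMonoidHom.toMultiplicativeLeft
    (ZMod.lift m ⟨zmultiplesHom (Additive G) (Additive.ofMul g), by
      rw [zmultiplesHom_apply, natCast_zsmul, ← ofMul_pow, hg, ofMul_one]⟩)

theorem zmodPowHom_ofAdd_intCast (g : G) (hg : g ^ m = 1) (i : ℤ) :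
    zmodPowHom g hg (.ofAdd (i : ZMod m)) = g ^ i := by
  simp [zmodPowHom]

theorem zmodPowHom_ofAdd_one (g : G) (hg : g ^ m = 1) : zmodPowHom g hg (.ofAdd 1) = g := by
  simpa using zmodPowHom_ofAdd_intCast g hg 1

theorem monoidHom_zmod_ext {f g : Multiplicative (ZMod m) →* G}
    (h : f (.ofAdd 1) = g (.ofAdd 1)) : f = g := by
  refine MonoidHom.ext fun i ↦ ?_
  obtain ⟨i, rfl⟩ := Multiplicative.ofAdd.surjective i
  obtain ⟨i, rfl⟩ := ZMod.intCast_surjective i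
  rw [← zsmul_one, ofAdd_zsmul, map_zpow, map_zpow, h]

theorem monoidHom_zmod_prod_ext {f g : Multiplicative (ZMod m) × Multiplicative (ZMod k) →* G}
    (h₁ : f (.ofAdd 1, 1) = g (.ofAdd 1, 1)) (h₂ : f (1, .ofAdd 1) = g (1, .ofAdd 1)) :
    f = g := by
  have hl : f.comp (.inl _ _) = g.comp (.inl _ _) := monoidHom_zmod_ext h₁
  have hr : f.comp (.inr _ _) = g.comp (.inr _ _) := monoidHom_zmod_ext h₂
  rw [← f.noncommCoprod_unique, ← g.noncommCoprod_unique]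
  simp only [hl, hr]

theorem zmodPowHom_commute {a b : G} (hab : Commute a b) (ha : a ^ m = 1) (hb : b ^ k = 1)
    (i : Multiplicative (ZMod m)) (j : Multiplicative (ZMod k)) :
    Commute (zmodPowHom a ha i) (zmodPowHom b hb j) := by
  obtain ⟨i, rfl⟩ := Multiplicative.ofAdd.surjective i
  obtain ⟨j, rfl⟩ := Multiplicative.ofAdd.surjective j
  obtain ⟨i, rfl⟩ := ZMod.intCast_surjective i
  obtain ⟨j, rfl⟩ := ZMod.intCast_surjective j
  rw [zmodPowHom_ofAdd_intCast, zmodPowHom_ofAdd_intCast]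
  exact hab.zpow_zpow i j

theorem mul_zmodPowHom_mul {ρ σ : G} (hρ : ρ ^ m = 1) (hσ : σ ^ 2 = 1) (hσρ : (σ * ρ) ^ 2 = 1)
    (i : ZMod m) :
    σ * zmodPowHom ρ hρ (.ofAdd i) * σ = zmodPowHom ρ hρ (.ofAdd (-i)) := by
  obtain ⟨i, rfl⟩ := ZMod.intCast_surjective i
  have hσ_inv : σ⁻¹ = σ := inv_eq_of_mul_eq_one_left (by rw [← sq, hσ])
  have hconj : σ * ρ * σ⁻¹ = ρ⁻¹ := by
    rw [eq_inv_iff_mul_eq_one, hσ_inv, mul_assoc, ← sq, hσρ]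
  rw [← Int.cast_neg, zmodPowHom_ofAdd_intCast, zmodPowHom_ofAdd_intCast, zpow_neg, ← inv_zpow,
    ← hconj, conj_zpow, hσ_inv]

/-- The homomorphism out of the dihedral group of order `2 * m` that sends the rotation `r 1` to `ρ`
and the reflection `sr 0` to `σ`. -/
def dihedralLift (ρ σ : G) (hρ : ρ ^ m = 1) (hσ : σ ^ 2 = 1) (hσρ : (σ * ρ) ^ 2 = 1) :
    DihedralGroup m →* G :=
  let z (i : ZMod m) : G := zmodPowHom ρ hρ (.ofAdd i)
  have z_add (i j : ZMod m) : z (i + j) = z i * z j := by simp only [z, ofAdd_add, map_mul]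
  have z_mul (i : ZMod m) : z i * σ = σ * z (-i) := by
    simp only [z, ← mul_zmodPowHom_mul hρ hσ hσρ, ← mul_assoc, ← sq, hσ, one_mul]
  MonoidHom.mk'
    (fun
      | .r i => z i
      | .sr i => σ * z i)
    (by
      rintro (i | i) (j | j)
      · exact z_add i j
      · simp only [DihedralGroup.r_mul_sr, sub_eq_neg_add, z_add]
        rw [← mul_assoc, ← z_mul, mul_assoc]
      · simp only [DihedralGroup.sr_mul_r, z_add, mul_assoc]
      · simp only [DihedralGroup.sr_mul_sr, sub_eq_neg_add, z_add]
        rw [mul_assoc, ← mul_assoc (z i), z_mul, ← mul_assoc, ← mul_assoc, ← sq, hσ, one_mul])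

theorem dihedralLift_r_one {ρ σ : G} (hρ : ρ ^ m = 1) (hσ : σ ^ 2 = 1) (hσρ : (σ * ρ) ^ 2 = 1) :
    dihedralLift ρ σ hρ hσ hσρ (.r 1) = ρ :=
  zmodPowHom_ofAdd_one ρ hρ

theorem dihedralLift_sr_zero {ρ σ : G} (hρ : ρ ^ m = 1) (hσ : σ ^ 2 = 1)
    (hσρ : (σ * ρ) ^ 2 = 1) : dihedralLift ρ σ hρ hσ hσρ (.sr 0) = σ := by
  simp [dihedralLift]

theorem closure_r_one_sr_zero :
    Subgroup.closure {DihedralGroup.r 1, DihedralGroup.sr 0} =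
      (⊤ : Subgroup (DihedralGroup m)) := by
  have hr (i : ZMod m) : DihedralGroup.r i ∈
      Subgroup.closure {DihedralGroup.r (1 : ZMod m), DihedralGroup.sr 0} := by
    obtain ⟨i, rfl⟩ := ZMod.intCast_surjective i
    rw [← DihedralGroup.r_one_zpow]
    exact zpow_mem (Subgroup.subset_closure (by simp)) i
  rw [eq_top_iff]
  rintro (i | i) -
  · exact hr i
  · rw [← zero_add i, ← DihedralGroup.sr_mul_r]
    exact mul_mem (Subgroup.subset_closure (by simp)) (hr i)

theorem comp_eq_conj_comp_of_closure_eq_top {N D : Type*} [Group N] [Group D] {φ : D →* MulAut N}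
    {f : N →* G} {g : D →* G} {S : Set D} (hS : Subgroup.closure S = ⊤)
    (h : ∀ d ∈ S, f.comp (φ d).toMonoidHom = (MulAut.conj (g d)).toMonoidHom.comp f) (d : D) :
    f.comp (φ d).toMonoidHom = (MulAut.conj (g d)).toMonoidHom.comp f := by
  have hd : d ∈ Subgroup.closure S := hS ▸ Subgroup.mem_top d
  simp only [MonoidHom.ext_iff, MonoidHom.comp_apply, MulEquiv.coe_toMonoidHom,
    MulAut.conj_apply] at h ⊢
  induction hd using Subgroup.closure_induction with
  | mem d hd => exact h d hd
  | one => simp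
  | mul d e _ _ ihd ihe => intro v; simp only [map_mul, MulAut.mul_apply, ihd, ihe]; group
  | inv d _ ihd =>
    intro v
    have hv := ihd (φ d⁻¹ v)
    rw [map_inv, MulAut.apply_inv_self] at hv
    simp only [map_inv, hv, mul_assoc, inv_inv, inv_mul_cancel_left, inv_mul_cancel, mul_one]

end Homomorphisms

section Conjugates

variable {a x : G}

theorem mul_pow_three_eq_mul_conj_mul_conj (hx : x ^ 3 = 1) (a : G) :
    (a * x) ^ 3 = a * (x * a * x⁻¹) * (x⁻¹ * a * x) := by
  calc (a * x) ^ 3 = a * (x * a * x⁻¹) * x ^ 3 * (x⁻¹ * a * x) := by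
        simp only [pow_succ, pow_zero, one_mul, mul_assoc, inv_mul_cancel_left, mul_inv_cancel_left]
    _ = a * (x * a * x⁻¹) * (x⁻¹ * a * x) := by rw [hx, mul_one]

theorem conj_conj_eq_inv_mul_conj (hx : x ^ 3 = 1) (hax : (a * x) ^ 3 = 1) :
    x * (x * a * x⁻¹) * x⁻¹ = (a * (x * a * x⁻¹))⁻¹ := by
  rw [eq_inv_iff_mul_eq_one, ← mul_eq_one_comm]
  calc a * (x * a * x⁻¹) * (x * (x * a * x⁻¹) * x⁻¹) = (a * x) ^ 3 * (x ^ 3)⁻¹ := by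
        simp [pow_succ, mul_assoc]
    _ = 1 := by rw [hax, hx, inv_one, mul_one]

/-- The conjugates `a, b, c` of `a` under the powers of `x` satisfy `a * b * c = (a * x) ^ 3` and
`a⁻¹ * b⁻¹ * c⁻¹ = (a⁻¹ * x) ^ 3`, so `a * b` and `b * a` are both inverse to `c`. -/
theorem commute_conj_of_pow_three (hx : x ^ 3 = 1) (hax : (a * x) ^ 3 = 1)
    (hax' : (a⁻¹ * x) ^ 3 = 1) : Commute a (x * a * x⁻¹) := by
  have habc := (mul_pow_three_eq_mul_conj_mul_conj hx a).symm.trans hax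
  have habc' := (mul_pow_three_eq_mul_conj_mul_conj hx a⁻¹).symm.trans hax'
  have hcba : (x⁻¹ * a * x) * ((x * a * x⁻¹) * a) = 1 := by
    rw [← inv_eq_one, ← habc']
    group
  exact (eq_inv_of_mul_eq_one_left habc).trans (eq_inv_of_mul_eq_one_right hcba).symm

end Conjugates

/-- The defining relations of the Fermat group `G_n`, required of two elements `x`, `y` of an
arbitrary group. -/
structure FermatRelations (n : ℕ) (x y : G) : Prop where
  pow_three : x ^ 3 = 1
  pow_two_mul : y ^ (2 * n) = 1
  mul_sq : (x * y) ^ 2 = 1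
  commutator_pow_three : (x * y * x⁻¹ * y⁻¹) ^ 3 = 1

theorem FermatRelations.lift_eq_one {n : ℕ} {x y : G} (h : FermatRelations n x y) :
    ∀ w ∈ fermatRels n, FreeGroup.lift ![x, y] w = 1 := by
  obtain ⟨hx, hy, hxy, hc⟩ := h
  rintro w (rfl | rfl | rfl | rfl) <;> simpa

theorem fermatRelations_of (n : ℕ) :
    FermatRelations n (PresentedGroup.of (rels := fermatRels n) 0) (.of 1) := by
  constructor <;> exact PresentedGroup.one_of_mem (by simp [fermatRels])

section MulSq

variable {x y : G}

theorem mul_mul_eq_inv_of_mul_sq (hxy : (x * y) ^ 2 = 1) : x * y * x = y⁻¹ := by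
  rw [eq_inv_iff_mul_eq_one, ← hxy, sq, mul_assoc (x * y)]

theorem commutator_eq_conj_of_pow_three (hx : x ^ 3 = 1) (hxy : (x * y) ^ 2 = 1) :
    x * y * x⁻¹ * y⁻¹ = y * ((y ^ 2)⁻¹ * x) * y⁻¹ := by
  calc x * y * x⁻¹ * y⁻¹ = x * y * x * (x ^ 3)⁻¹ * x * y⁻¹ := by group
    _ = y * ((y ^ 2)⁻¹ * x) * y⁻¹ := by
      rw [mul_mul_eq_inv_of_mul_sq hxy, hx]
      group

theorem commutator_pow_three_eq_one_iff (hx : x ^ 3 = 1) (hxy : (x * y) ^ 2 = 1) :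
    (x * y * x⁻¹ * y⁻¹) ^ 3 = 1 ↔ ((y ^ 2)⁻¹ * x) ^ 3 = 1 := by
  rw [commutator_eq_conj_of_pow_three hx hxy, conj_pow, conj_eq_one_iff]

theorem sq_mul_pow_three_eq_one (hx : x ^ 3 = 1) (hxy : (x * y) ^ 2 = 1) :
    (y ^ 2 * x) ^ 3 = 1 := by
  have hyxy : x * y = y⁻¹ * x⁻¹ := by
    rw [← mul_inv_rev, eq_inv_iff_mul_eq_one, ← sq, hxy]
  have hconj : y ^ 2 * x = y * x⁻¹ * y⁻¹ := by
    rw [eq_mul_inv_iff_mul_eq, mul_assoc, hyxy]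
    group
  rw [hconj, conj_pow, inv_pow, hx, inv_one, mul_one, mul_inv_cancel]

theorem reflection_mul_rotation_sq (hx : x ^ 3 = 1) (hxy : (x * y) ^ 2 = 1) :
    (x * y * ((y ^ 2)⁻¹ * x)) ^ 2 = 1 := by
  calc (x * y * ((y ^ 2)⁻¹ * x)) ^ 2 = x * y⁻¹ * x ^ 3 * (x⁻¹ * y⁻¹ * x) := by
        simp [pow_succ, mul_assoc]
    _ = x * y⁻¹ * (x⁻¹ * (x * y * x) * x) := by rw [hx, mul_one, mul_mul_eq_inv_of_mul_sq hxy]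
    _ = x ^ 3 := by simp only [pow_succ, pow_zero, one_mul, mul_assoc, inv_mul_cancel_left]
    _ = 1 := hx

end MulSq

section Model

variable (n : ℕ)

/-- The rank-two lattice modulo `n` on which the dihedral group of order 6 acts, generated by
`a = (ofAdd 1, 1)` and `b = (1, ofAdd 1)`. -/
abbrev Lattice : Type := Multiplicative (ZMod n) × Multiplicative (ZMod n)

/-- The automorphism of `Lattice n` that permutes `a`, `b` and `c = (a * b)⁻¹` cyclically. -/
def latticeRotation : MulAut (Lattice n) where
  toFun v := (v.2⁻¹, v.1 * v.2⁻¹)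
  invFun v := (v.1⁻¹ * v.2, v.1⁻¹)
  left_inv v := by ext <;> simp
  right_inv v := by ext <;> simp
  map_mul' v w := by ext <;> simp only [Prod.fst_mul, Prod.snd_mul, mul_inv, mul_mul_mul_comm]

theorem latticeRotation_apply (v : Lattice n) : latticeRotation n v = (v.2⁻¹, v.1 * v.2⁻¹) := rfl

/-- The automorphism of `Lattice n` that exchanges `a` and `b`. -/
def latticeReflection : MulAut (Lattice n) := MulEquiv.prodComm

theorem latticeReflection_apply (v : Lattice n) : latticeReflection n v = v.swap := rfl

/-- The action of the dihedral group of order 6 on `Lattice n` by permutations of `a`, `b`, `c`. -/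
def latticeAction : DihedralGroup 3 →* MulAut (Lattice n) :=
  dihedralLift (latticeRotation n) (latticeReflection n)
    (by ext v <;> simp [pow_succ, latticeRotation_apply])
    (by ext v <;> simp [pow_succ, latticeReflection_apply])
    (by ext v <;> simp [pow_succ, latticeRotation_apply, latticeReflection_apply])

theorem latticeAction_r_one : latticeAction n (.r 1) = latticeRotation n :=
  dihedralLift_r_one ..

theorem latticeAction_sr_zero : latticeAction n (.sr 0) = latticeReflection n :=
  dihedralLift_sr_zero ..

theorem latticeAction_sr_one :
    latticeAction n (.sr 1) = latticeReflection n * latticeRotation n := by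
  rw [← latticeAction_sr_zero, ← latticeAction_r_one, ← map_mul, DihedralGroup.sr_mul_r, zero_add]

/-- The semidirect product that realises the Fermat group. -/
abbrev FermatModel : Type := Lattice n ⋊[latticeAction n] DihedralGroup 3

namespace FermatModel

/-- The element `a * r 1` of the model, the image of the generator `X`. -/
def x : FermatModel n := ⟨(.ofAdd 1, 1), .r 1⟩

/-- The element `c⁻¹ * sr 1` of the model, the image of the generator `Y`. -/
def y : FermatModel n := ⟨(.ofAdd 1, .ofAdd 1), .sr 1⟩

theorem x_pow_three : x n ^ 3 = 1 := by
  ext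
  · simp [x, pow_succ, latticeAction_r_one, latticeRotation_apply, -DihedralGroup.r_mul_r]
  · simp [x, pow_succ, latticeAction_r_one, latticeRotation_apply, -DihedralGroup.r_mul_r]
  · exact (map_pow SemidirectProduct.rightHom (x n) 3).trans DihedralGroup.r_one_pow_n

theorem x_mul_y : x n * y n = SemidirectProduct.inr (.sr 0) := by
  ext <;> simp [x, y, latticeAction_r_one, latticeRotation_apply]

theorem y_sq : y n ^ 2 = SemidirectProduct.inl (.ofAdd 1, 1) := by
  ext <;> simp [y, sq, latticeAction_sr_one, latticeRotation_apply, latticeReflection_apply]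

theorem y_sq_inv_mul_x : (y n ^ 2)⁻¹ * x n = SemidirectProduct.inr (.r 1) := by
  rw [y_sq, x, SemidirectProduct.mk_eq_inl_mul_inr, inv_mul_cancel_left]

theorem y_pow_two_mul_self : y n ^ (2 * n) = 1 := by
  rw [pow_mul, y_sq, ← map_pow, Prod.pow_mk, ← ofAdd_nsmul, nsmul_one, ZMod.natCast_self,
    ofAdd_zero, one_pow, Prod.mk_one_one, map_one]

theorem x_mul_y_sq : (x n * y n) ^ 2 = 1 := by
  rw [x_mul_y, ← map_pow, sq, DihedralGroup.sr_mul_self, map_one]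

theorem fermatRelations : FermatRelations n (x n) (y n) where
  pow_three := x_pow_three n
  pow_two_mul := y_pow_two_mul_self n
  mul_sq := x_mul_y_sq n
  commutator_pow_three := by
    rw [commutator_pow_three_eq_one_iff (x_pow_three n) (x_mul_y_sq n), y_sq_inv_mul_x, ← map_pow,
      DihedralGroup.r_one_pow_n, map_one]

theorem orderOf_x : orderOf (x n) = 3 := by
  refine orderOf_eq_prime (x_pow_three n) fun h ↦ ?_
  have : DihedralGroup.r (1 : ZMod 3) = 1 := congrArg SemidirectProduct.right h
  rw [← orderOf_eq_one_iff, DihedralGroup.orderOf_r_one] at this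
  omega

theorem orderOf_y : orderOf (y n) = 2 * n := by
  have htwo : 2 ∣ orderOf (y n) := by
    rw [← DihedralGroup.orderOf_sr (1 : ZMod 3)]
    exact orderOf_map_dvd SemidirectProduct.rightHom (y n)
  have hsq : orderOf (y n ^ 2) = n := by
    rw [y_sq, orderOf_injective _ SemidirectProduct.inl_injective, Prod.orderOf_mk,
      orderOf_ofAdd_eq_addOrderOf, ZMod.addOrderOf_one, orderOf_one, Nat.lcm_one_right]
  rw [orderOf_pow_of_dvd two_ne_zero htwo] at hsq
  rw [← Nat.mul_div_cancel' htwo, hsq]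

theorem natCard : Nat.card (FermatModel n) = 6 * n ^ 2 := by
  rw [SemidirectProduct.card, Nat.card_prod, DihedralGroup.nat_card,
    Nat.card_congr Multiplicative.toAdd, Nat.card_zmod]
  ring

variable {n} in
theorem monoidHom_ext {f g : FermatModel n →* G} (hx : f (x n) = g (x n))
    (hy : f (y n) = g (y n)) : f = g := by
  have hr : f (.inr (.r 1)) = g (.inr (.r 1)) := by
    simp only [← y_sq_inv_mul_x, map_mul, map_inv, map_pow, hx, hy]
  have hs : f (.inr (.sr 0)) = g (.inr (.sr 0)) := by
    simp only [← x_mul_y, map_mul, hx, hy]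
  have ha : f (.inl (.ofAdd 1, 1)) = g (.inl (.ofAdd 1, 1)) := by
    simp only [← y_sq, map_pow, hy]
  have hb : f (.inl (1, .ofAdd 1)) = g (.inl (1, .ofAdd 1)) := by
    have hab : ((1, .ofAdd 1) : Lattice n) = latticeAction n (.r 1) (.ofAdd 1, 1) := by
      simp [latticeAction_r_one, latticeRotation_apply]
    simp only [hab, SemidirectProduct.inl_aut, map_mul, map_inv, ha, hr]
  refine SemidirectProduct.hom_ext (monoidHom_zmod_prod_ext ha hb)
    (MonoidHom.eq_of_eqOn_dense closure_r_one_sr_zero ?_)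
  rintro _ (rfl | rfl)
  exacts [hr, hs]

end FermatModel

end Model

section Isomorphism

variable {n : ℕ} {x y : G}

namespace FermatRelations

theorem sq_pow (h : FermatRelations n x y) : (y ^ 2) ^ n = 1 := by rw [← pow_mul, h.pow_two_mul]

theorem conj_sq_pow (h : FermatRelations n x y) : (x * y ^ 2 * x⁻¹) ^ n = 1 := by
  rw [conj_pow, h.sq_pow, mul_one, mul_inv_cancel]

theorem inv_sq_mul_pow_three (h : FermatRelations n x y) : ((y ^ 2)⁻¹ * x) ^ 3 = 1 :=
  (commutator_pow_three_eq_one_iff h.pow_three h.mul_sq).mp h.commutator_pow_three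

theorem commute_sq_conj_sq (h : FermatRelations n x y) : Commute (y ^ 2) (x * y ^ 2 * x⁻¹) :=
  commute_conj_of_pow_three h.pow_three (sq_mul_pow_three_eq_one h.pow_three h.mul_sq)
    h.inv_sq_mul_pow_three

/-- The homomorphism from the lattice that sends `a` to `y ^ 2` and `b` to its conjugate under
`x`. -/
def latticeHom (h : FermatRelations n x y) : Lattice n →* G :=
  (zmodPowHom (y ^ 2) h.sq_pow).noncommCoprod (zmodPowHom (x * y ^ 2 * x⁻¹) h.conj_sq_pow)
    (zmodPowHom_commute h.commute_sq_conj_sq _ _)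

theorem latticeHom_ofAdd_one_left (h : FermatRelations n x y) :
    h.latticeHom (.ofAdd 1, 1) = y ^ 2 := by
  simp [latticeHom, zmodPowHom_ofAdd_one]

theorem latticeHom_ofAdd_one_right (h : FermatRelations n x y) :
    h.latticeHom (1, .ofAdd 1) = x * y ^ 2 * x⁻¹ := by
  simp [latticeHom, zmodPowHom_ofAdd_one]

/-- The homomorphism from the dihedral group that sends the rotation to `y⁻² * x` and the reflection
to `x * y`. -/
def dihedralHom (h : FermatRelations n x y) : DihedralGroup 3 →* G :=
  dihedralLift ((y ^ 2)⁻¹ * x) (x * y) h.inv_sq_mul_pow_three h.mul_sq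
    (reflection_mul_rotation_sq h.pow_three h.mul_sq)

theorem dihedralHom_r_one (h : FermatRelations n x y) :
    h.dihedralHom (.r 1) = (y ^ 2)⁻¹ * x :=
  dihedralLift_r_one ..

theorem dihedralHom_sr_zero (h : FermatRelations n x y) : h.dihedralHom (.sr 0) = x * y :=
  dihedralLift_sr_zero ..

theorem latticeHom_comp_rotation (h : FermatRelations n x y) :
    h.latticeHom.comp (latticeRotation n).toMonoidHom =
      (MulAut.conj ((y ^ 2)⁻¹ * x)).toMonoidHom.comp h.latticeHom := by
  have hab := h.commute_sq_conj_sq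
  have hc := conj_conj_eq_inv_mul_conj h.pow_three (sq_mul_pow_three_eq_one h.pow_three h.mul_sq)
  apply monoidHom_zmod_prod_ext
  · calc h.latticeHom (latticeRotation n (.ofAdd 1, 1)) = x * y ^ 2 * x⁻¹ := by
          simp only [latticeRotation_apply, inv_one, mul_one, latticeHom_ofAdd_one_right]
      _ = (y ^ 2)⁻¹ * (x * y ^ 2 * x⁻¹) * y ^ 2 := hab.inv_mul_cancel.symm
      _ = (y ^ 2)⁻¹ * x * y ^ 2 * ((y ^ 2)⁻¹ * x)⁻¹ := by group
      _ = (y ^ 2)⁻¹ * x * h.latticeHom (.ofAdd 1, 1) * ((y ^ 2)⁻¹ * x)⁻¹ := by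
          rw [latticeHom_ofAdd_one_left]
  · have himage : latticeRotation n (1, .ofAdd 1) = ((.ofAdd 1, 1) * (1, .ofAdd 1))⁻¹ := by
      simp [latticeRotation_apply]
    calc h.latticeHom (latticeRotation n (1, .ofAdd 1)) = (y ^ 2 * (x * y ^ 2 * x⁻¹))⁻¹ := by
          rw [himage, map_inv, map_mul, latticeHom_ofAdd_one_left, latticeHom_ofAdd_one_right]
      _ = (y ^ 2)⁻¹ * (y ^ 2 * (x * y ^ 2 * x⁻¹))⁻¹ * y ^ 2 :=
          ((Commute.refl _).mul_right hab).inv_right.inv_mul_cancel.symm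
      _ = (y ^ 2)⁻¹ * x * (x * y ^ 2 * x⁻¹) * ((y ^ 2)⁻¹ * x)⁻¹ := by
          rw [← hc]
          group
      _ = (y ^ 2)⁻¹ * x * h.latticeHom (1, .ofAdd 1) * ((y ^ 2)⁻¹ * x)⁻¹ := by
          rw [latticeHom_ofAdd_one_right]

theorem latticeHom_comp_reflection (h : FermatRelations n x y) :
    h.latticeHom.comp (latticeReflection n).toMonoidHom =
      (MulAut.conj (x * y)).toMonoidHom.comp h.latticeHom := by
  have hxy : (x * y)⁻¹ = x * y := inv_eq_of_mul_eq_one_left (by rw [← sq, h.mul_sq])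
  have hconj : x * y * y ^ 2 * (x * y)⁻¹ = x * y ^ 2 * x⁻¹ := by group
  apply monoidHom_zmod_prod_ext
  · calc h.latticeHom (1, .ofAdd 1) = x * y * y ^ 2 * (x * y)⁻¹ := by
          rw [latticeHom_ofAdd_one_right, hconj]
      _ = x * y * h.latticeHom (.ofAdd 1, 1) * (x * y)⁻¹ := by rw [latticeHom_ofAdd_one_left]
  · calc h.latticeHom (.ofAdd 1, 1) = (x * y)⁻¹ * (x * y * y ^ 2 * (x * y)⁻¹) * (x * y) := by
          rw [latticeHom_ofAdd_one_left]
          group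
      _ = x * y * h.latticeHom (1, .ofAdd 1) * (x * y)⁻¹ := by
          rw [latticeHom_ofAdd_one_right, hconj, hxy]

/-- The homomorphism from the model that sends its two distinguished generators to `x` and `y`. -/
def modelHom (h : FermatRelations n x y) : FermatModel n →* G :=
  SemidirectProduct.lift h.latticeHom h.dihedralHom <|
    comp_eq_conj_comp_of_closure_eq_top closure_r_one_sr_zero <| by
      rintro _ (rfl | rfl)
      · rw [latticeAction_r_one, dihedralHom_r_one, latticeHom_comp_rotation]
      · rw [latticeAction_sr_zero, dihedralHom_sr_zero, latticeHom_comp_reflection]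

theorem modelHom_inl (h : FermatRelations n x y) (v : Lattice n) :
    h.modelHom (SemidirectProduct.inl v) = h.latticeHom v :=
  SemidirectProduct.lift_inl ..

theorem modelHom_inr (h : FermatRelations n x y) (d : DihedralGroup 3) :
    h.modelHom (SemidirectProduct.inr d) = h.dihedralHom d :=
  SemidirectProduct.lift_inr ..

theorem modelHom_x (h : FermatRelations n x y) : h.modelHom (FermatModel.x n) = x := by
  rw [FermatModel.x, SemidirectProduct.mk_eq_inl_mul_inr, map_mul, modelHom_inl, modelHom_inr,
    latticeHom_ofAdd_one_left, dihedralHom_r_one, mul_inv_cancel_left]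

theorem modelHom_y (h : FermatRelations n x y) : h.modelHom (FermatModel.y n) = y := by
  have hxy := congrArg h.modelHom (FermatModel.x_mul_y n)
  rwa [map_mul, modelHom_x, modelHom_inr, dihedralHom_sr_zero, mul_right_inj] at hxy

end FermatRelations

end Isomorphism

theorem isFermat_model (n : ℕ) :
    IsFermat n (FermatModel n) (FermatModel.x n) (FermatModel.y n) := by
  let toModel := PresentedGroup.toGroup (FermatModel.fermatRelations n).lift_eq_one
  let ofModel := (fermatRelations_of n).modelHom
  have toModel_x : toModel (.of 0) = FermatModel.x n := PresentedGroup.toGroup.of _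
  have toModel_y : toModel (.of 1) = FermatModel.y n := PresentedGroup.toGroup.of _
  have ofModel_x : ofModel (FermatModel.x n) = .of 0 := (fermatRelations_of n).modelHom_x
  have ofModel_y : ofModel (FermatModel.y n) = .of 1 := (fermatRelations_of n).modelHom_y
  have left_inv : ofModel.comp toModel = .id _ := by
    refine PresentedGroup.ext (Fin.forall_fin_two.mpr ⟨?_, ?_⟩)
    · simp [toModel_x, ofModel_x]
    · simp [toModel_y, ofModel_y]
  have right_inv : toModel.comp ofModel = .id _ := by
    refine FermatModel.monoidHom_ext ?_ ?_
    · simp [toModel_x, ofModel_x]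
    · simp [toModel_y, ofModel_y]
  exact ⟨toModel.toMulEquiv ofModel left_inv right_inv, toModel_x, toModel_y⟩

/-- The Fermat group `G_n` is finite of order `6n²`, with `X` of order 3 and `Y` of
order `2n`. -/
theorem fermat_group_card_and_orders (n : ℕ) (hn : 1 ≤ n) :
    Finite (PresentedGroup (fermatRels n)) ∧
    Nat.card (PresentedGroup (fermatRels n)) = 6 * n ^ 2 ∧
    orderOf (PresentedGroup.of (rels := fermatRels n) 0) = 3 ∧
    orderOf (PresentedGroup.of (rels := fermatRels n) 1) = 2 * n := by
  obtain ⟨e, hx, hy⟩ := isFermat_model n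
  have hcard : Nat.card (PresentedGroup (fermatRels n)) = 6 * n ^ 2 := by
    rw [Nat.card_congr e.toEquiv, FermatModel.natCard]
  refine ⟨Nat.finite_of_card_ne_zero (hcard ▸ by positivity), hcard, ?_, ?_⟩
  · rw [← e.orderOf_eq, hx, FermatModel.orderOf_x]
  · rw [← e.orderOf_eq, hy, FermatModel.orderOf_y]

end RegularMap
end
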